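/- arXiv:2003.11002 — 3 statements merged into one kernel-verified Lean document; each statement's English description precedes it below -/
import Mathlib

section
/- Let L̂ : L_p(μ) → ℂ be a continuous m-homogeneous polynomial, m ≥ 2, on a complex L_p(μ) space with m′ ≤ p ≤ m, where m′ = m/(m−1). Then for every k ≤ m and every x ∈ L_p(μ) with ‖x‖_p < 1, ‖D̂^k L̂(x)‖ ≤ k! · (1−‖x‖_p^{m′})^{−k/m′} · ‖L̂‖. -/
open Metric MeasureTheory

theorem aux_term (n j : ℕ) (hj : j ≤ n + 1) (α β : ℝ) (hα : 0 ≤ α) (hβ : 0 ≤ β) :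
    ((n+1).choose j : ℝ) * ((α^n)^(n+1-j) * (β^n)^j) ≤
      (n.choose j : ℝ) * ((α^(n+1))^(n-j) * (β^(n+1))^j) +
      (if j = 0 then 0 else (n.choose (j-1) : ℝ) * ((α^(n+1))^(n-(j-1)) * (β^(n+1))^(j-1))) := by
  rcases Nat.eq_zero_or_pos j with rfl | hj0
  · simp
    rw [← pow_mul, ← pow_mul, mul_comm]
  obtain ⟨i, rfl⟩ : ∃ i, j = i + 1 := ⟨j - 1, by omega⟩
  rcases Nat.lt_or_ge i n with h | h
  swap
  · obtain rfl : i = n := by omega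
    simp
    rw [← pow_mul, ← pow_mul, mul_comm]
  obtain ⟨d, rfl⟩ : ∃ d, n = i + 1 + d := ⟨n - (i+1), by omega⟩
  have e1 : i + 1 + d + 1 - (i + 1) = d + 1 := by omega
  have e2 : i + 1 + d - (i + 1) = d := by omega
  have e3 : i + 1 + d - (i + 1 - 1) = d + 1 := by omega
  rw [e1, e2, e3]
  simp only [Nat.add_eq_zero_iff, one_ne_zero, and_false, if_false, Nat.add_sub_cancel]
  have hc := Nat.choose_succ_right_eq (i+1+d) i
  have hc' : i + 1 + d - i = d + 1 := by omega
  rw [hc'] at hc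
  have hP := Nat.choose_succ_succ (i+1+d) i
  have hcR : ((i+1+d).choose (i+1) : ℝ) * (i+1) = (i+1+d).choose i * (d+1) := by exact_mod_cast hc
  have hPR : ((i+1+d+1).choose (i+1) : ℝ) = (i+1+d).choose i + (i+1+d).choose (i+1) := by
    exact_mod_cast hP
  set N : ℝ := (i:ℝ)+1+d+1 with hN
  have hNpos : 0 < N := by positivity
  have amgm := Real.geom_mean_le_arith_mean2_weighted (w₁ := (d+1)/N) (w₂ := (i+1)/N)
    (p₁ := (α^d*β^(i+1))^(i+1+d+1)) (p₂ := (α^(d+1)*β^i)^(i+1+d+1)) (by positivity) (by positivity)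
    (by positivity) (by positivity) (by field_simp; rw [hN]; ring)
  have pw : ∀ (e : ℝ) (t : ℕ), 0 ≤ e → (e^(i+1+d+1))^(((t:ℝ)+1)/N) = e^(t+1) := by
    intro e t he
    rw [← Real.rpow_natCast, ← Real.rpow_mul he, ← Real.rpow_natCast]
    congr 1
    push_cast
    rw [← hN]; field_simp
  rw [pw _ d (by positivity), pw _ i (by positivity)] at amgm
  have hK : ((i+1+d+1).choose (i+1) : ℝ) * ((d+1)/N) = (i+1+d).choose (i+1) := by
    rw [hPR]; field_simp; rw [hN]; linarith
  have hK2 : ((i+1+d+1).choose (i+1) : ℝ) * ((i+1)/N) = (i+1+d).choose i := by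
    rw [hPR]; field_simp; rw [hN]; linarith
  have := mul_le_mul_of_nonneg_left amgm (Nat.cast_nonneg ((i+1+d+1).choose (i+1)) : (0:ℝ) ≤ _)
  rw [mul_add, ← mul_assoc _ ((d+1)/N), ← mul_assoc _ ((i+1)/N), hK, hK2] at this
  refine le_trans (le_of_eq ?_) (this.trans (le_of_eq ?_)) <;> ring

theorem aux_real (n : ℕ) (α β : ℝ) (hα : 0 ≤ α) (hβ : 0 ≤ β) :
    (α^n+β^n)^(n+1) + (α^n-β^n)^(n+1) ≤ 2 * (α^(n+1)+β^(n+1))^n := by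
  set T : ℕ → ℝ := fun j => (n.choose j : ℝ) * ((α^(n+1))^(n-j) * (β^(n+1))^j) with hT
  have hR : (α^(n+1)+β^(n+1))^n = ∑ j ∈ Finset.range (n+1), T j := by
    rw [add_comm, add_pow]
    refine Finset.sum_congr rfl fun j _ => ?_
    simp only [hT]; ring
  have hL : (α^n+β^n)^(n+1) + (α^n-β^n)^(n+1) = ∑ j ∈ Finset.range (n+2),
      (1 + (-1:ℝ)^j) * (((n+1).choose j : ℝ) * ((α^n)^(n+1-j) * (β^n)^j)) := by
    rw [sub_eq_neg_add, add_comm (α^n), add_pow, add_pow, ← Finset.sum_add_distrib]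
    refine Finset.sum_congr rfl fun j _ => ?_
    rw [neg_pow (β^n)]; ring
  have hw : ∀ j : ℕ, 0 ≤ 1 + (-1:ℝ)^j := by
    intro j; rcases neg_one_pow_eq_or ℝ j with h | h <;> rw [h] <;> norm_num
  rw [hL, hR]
  calc _ ≤ ∑ j ∈ Finset.range (n+2), (1 + (-1:ℝ)^j) * (T j + if j = 0 then 0 else T (j-1)) := by
        refine Finset.sum_le_sum fun j hj => mul_le_mul_of_nonneg_left ?_ (hw j)
        exact aux_term n j (by simp at hj; omega) α β hα hβ
    _ = 2 * ∑ j ∈ Finset.range (n+1), T j := by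
        simp only [mul_add, Finset.sum_add_distrib]
        rw [Finset.sum_range_succ, Finset.sum_range_succ' (fun j => (1 + (-1:ℝ)^j) * if j = 0 then 0 else T (j-1))]
        have : T (n+1) = 0 := by simp [hT]
        simp only [this, mul_zero, add_zero, Nat.add_eq_zero_iff, one_ne_zero, and_false, if_false, Nat.add_sub_cancel, if_true]
        rw [← Finset.sum_add_distrib, Finset.mul_sum]
        refine Finset.sum_congr rfl fun j _ => ?_
        rw [pow_succ]; ring

theorem aux_cvx (m : ℕ) (hm : 2 ≤ m) (a b : ℂ) :
    ‖a+b‖^m + ‖a-b‖^m ≤ (‖a‖+‖b‖)^m + (|‖a‖-‖b‖|)^m := by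
  have key : ∀ t : ℝ, 0 ≤ t → t^m = (t^2)^((m:ℝ)/2) := by
    intro t ht
    rw [← Real.rpow_natCast t 2, ← Real.rpow_mul ht, ← Real.rpow_natCast]; congr 1; push_cast; ring
  have h1 : ‖a+b‖^2 = ‖a‖^2+‖b‖^2 + 2 * (a * (starRingEnd ℂ) b).re := by
    rw [Complex.sq_norm, Complex.sq_norm, Complex.sq_norm, Complex.normSq_add]
  have h2 : ‖a-b‖^2 = ‖a‖^2+‖b‖^2 - 2 * (a * (starRingEnd ℂ) b).re := by
    rw [Complex.sq_norm, Complex.sq_norm, Complex.sq_norm, Complex.normSq_sub]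
  have h3 : |(a * (starRingEnd ℂ) b).re| ≤ ‖a‖*‖b‖ := by
    refine (Complex.abs_re_le_norm _).trans (by simp)
  rw [key _ (norm_nonneg _), key _ (norm_nonneg (a-b)), key _ (by positivity : 0 ≤ ‖a‖+‖b‖), key _ (abs_nonneg _), sq_abs, h1, h2]
  set d := (a * (starRingEnd ℂ) b).re
  set A := ‖a‖
  set B := ‖b‖
  have hA : 0 ≤ A := norm_nonneg _
  have hB : 0 ≤ B := norm_nonneg _
  have hcv := convexOn_rpow (p := (m:ℝ)/2) (by have : (2:ℝ) ≤ m := by exact_mod_cast hm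
                                               linarith)
  obtain ⟨h4, h5⟩ := abs_le.1 h3
  rcases eq_or_lt_of_le (mul_nonneg hA hB) with h0 | h0
  · have hd : d = 0 := by linarith
    rw [hd, add_sq, sub_sq]
    have : A * B = 0 := h0.symm
    have e1 : 2 * A * B = 0 := by linarith
    rw [e1]; simp
  · have hA0 : A ≠ 0 := by intro h; rw [h] at h0; simp at h0
    have hB0 : B ≠ 0 := by intro h; rw [h] at h0; simp at h0
    have hw1 : 0 ≤ (A*B+d)/(2*(A*B)) := div_nonneg (by linarith) (by linarith)
    have hw2 : 0 ≤ (A*B-d)/(2*(A*B)) := div_nonneg (by linarith) (by linarith)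
    have hs : (A*B+d)/(2*(A*B)) + (A*B-d)/(2*(A*B)) = 1 := by field_simp; ring
    have q1 := hcv.2 (x := (A+B)^2) (y := (A-B)^2) (Set.mem_Ici.2 (sq_nonneg _)) (Set.mem_Ici.2 (sq_nonneg _)) hw1 hw2 hs
    have q2 := hcv.2 (x := (A+B)^2) (y := (A-B)^2) (Set.mem_Ici.2 (sq_nonneg _)) (Set.mem_Ici.2 (sq_nonneg _)) hw2 hw1 (by linarith)
    simp only [smul_eq_mul] at q1 q2
    have e1 : (A*B+d)/(2*(A*B)) * (A+B)^2 + (A*B-d)/(2*(A*B)) * (A-B)^2 = A^2+B^2+2*d := by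
      field_simp; ring
    have e2 : (A*B-d)/(2*(A*B)) * (A+B)^2 + (A*B+d)/(2*(A*B)) * (A-B)^2 = A^2+B^2-2*d := by
      field_simp; ring
    rw [e1] at q1
    rw [e2] at q2
    set P := ((A+B)^2)^((m:ℝ)/2)
    set Q := ((A-B)^2)^((m:ℝ)/2)
    have : (A*B+d)/(2*(A*B)) = 1 - (A*B-d)/(2*(A*B)) := by linarith
    rw [this] at q1 q2
    nlinarith

theorem aux_scalar (m : ℕ) (hm : 2 ≤ m) (a b : ℂ) :
    ‖a+b‖^m + ‖a-b‖^m ≤ 2 * (‖a‖^((m:ℝ)/((m:ℝ)-1)) + ‖b‖^((m:ℝ)/((m:ℝ)-1)))^(m-1) := by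
  wlog hab : ‖b‖ ≤ ‖a‖ generalizing a b
  · have := this b a (by linarith)
    rwa [add_comm b a, norm_sub_rev b a, add_comm (‖b‖^_)] at this
  refine (aux_cvx m hm a b).trans ?_
  rw [abs_of_nonneg (by linarith)]
  obtain ⟨n, rfl⟩ : ∃ n, m = n + 1 := ⟨m - 1, by omega⟩
  have hn : (n:ℝ) ≠ 0 := by
    have : n ≠ 0 := by omega
    exact_mod_cast this
  have := aux_real n (‖a‖^((n:ℝ)⁻¹)) (‖b‖^((n:ℝ)⁻¹)) (by positivity) (by positivity)
  have e1 : ∀ t : ℝ, 0 ≤ t → (t^((n:ℝ)⁻¹))^n = t := by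
    intro t ht; rw [← Real.rpow_natCast, ← Real.rpow_mul ht, inv_mul_cancel₀ hn, Real.rpow_one]
  have e2 : ∀ t : ℝ, 0 ≤ t → (t^((n:ℝ)⁻¹))^(n+1) = t^(((n+1:ℕ):ℝ)/(((n+1:ℕ):ℝ)-1)) := by
    intro t ht; rw [← Real.rpow_natCast, ← Real.rpow_mul ht]; congr 1; push_cast; rw [add_sub_cancel_right]; field_simp
  rw [e1 _ (norm_nonneg _), e1 _ (norm_nonneg _), e2 _ (norm_nonneg _), e2 _ (norm_nonneg _)] at this
  exact this

theorem aux_norm {α : Type*} [MeasurableSpace α] {μ : Measure α} {p : ℝ} (hp : 0 < p)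
    (f : Lp ℂ (ENNReal.ofReal p) μ) : ‖f‖^p = ∫ a, ‖f a‖^p ∂μ := by
  have h := (Lp.memLp f).eLpNorm_eq_integral_rpow_norm (by simpa using hp) (by simp)
  rw [ENNReal.toReal_ofReal hp.le] at h
  have hI : 0 ≤ ∫ a, ‖f a‖^p ∂μ := integral_nonneg fun a => by positivity
  rw [Lp.norm_def, h, ENNReal.toReal_ofReal (by positivity), ← Real.rpow_mul hI,
    inv_mul_cancel₀ hp.ne', Real.rpow_one]

theorem aux_int {α : Type*} [MeasurableSpace α] {μ : Measure α} {p : ℝ} (hp : 0 < p)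
    (f : Lp ℂ (ENNReal.ofReal p) μ) : Integrable (fun a => ‖f a‖^p) μ := by
  have h := (Lp.memLp f).integrable_norm_rpow (by simpa using hp) (by simp)
  rwa [ENNReal.toReal_ofReal hp.le] at h

/-- Minkowski integral inequality for two functions. -/
theorem aux_mink {α : Type*} [MeasurableSpace α] {μ : Measure α} {s : ℝ} (hs : 1 ≤ s)
    (u v : α → ℝ) (hu : Integrable u μ) (hv : Integrable v μ) (hu0 : ∀ a, 0 ≤ u a)
    (hv0 : ∀ a, 0 ≤ v a) :
    ((∫ a, u a ∂μ)^s + (∫ a, v a ∂μ)^s)^(1/s) ≤ ∫ a, (u a^s + v a^s)^(1/s) ∂μ := by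
  have : Fact (1 ≤ ENNReal.ofReal s) := ⟨by simpa using hs⟩
  have hs0 : 0 < s := by linarith
  have hst : (ENNReal.ofReal s).toReal = s := ENNReal.toReal_ofReal hs0.le
  let f : α → WithLp (ENNReal.ofReal s) (ℝ × ℝ) := fun a => WithLp.toLp _ (u a, v a)
  have hf : Integrable f μ := by
    rw [integrable_prodLp_iff]
    exact ⟨hu, hv⟩
  have h := norm_integral_le_integral_norm (μ := μ) f
  simp only [WithLp.prod_norm_eq_add (hst.symm ▸ hs0), hst] at h
  rw [fst_integral_withLp hf, snd_integral_withLp hf] at h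
  have h' : (|∫ a, u a ∂μ|^s + |∫ a, v a ∂μ|^s)^(1/s) ≤ ∫ a, (|u a|^s + |v a|^s)^(1/s) ∂μ := h
  rw [abs_of_nonneg (integral_nonneg hu0), abs_of_nonneg (integral_nonneg hv0)] at h'
  simpa only [abs_of_nonneg (hu0 _), abs_of_nonneg (hv0 _)] using h'

theorem aux_mink2 {α : Type*} [MeasurableSpace α] {μ : Measure α} {p c : ℝ} (hc : 0 < c)
    (hp : c ≤ p) [Fact (1 ≤ ENNReal.ofReal p)] (x y : Lp ℂ (ENNReal.ofReal p) μ) :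
    Integrable (fun a => (‖x a‖^c + ‖y a‖^c)^(p/c)) μ ∧
    ∫ a, (‖x a‖^c + ‖y a‖^c)^(p/c) ∂μ ≤ (‖x‖^c+‖y‖^c)^(p/c) := by
  have hp0 : 0 < p := by linarith
  have hr : 1 ≤ p/c := by rwa [le_div_iff₀ hc, one_mul]
  have hr0 : 0 < p/c := by linarith
  have hmul : ENNReal.ofReal (p/c) * ENNReal.ofReal c = ENNReal.ofReal p := by
    rw [← ENNReal.ofReal_mul hr0.le, div_mul_cancel₀ _ hc.ne']
  have hE : ∀ z : Lp ℂ (ENNReal.ofReal p) μ,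
      eLpNorm (fun a => ‖z a‖^c) (ENNReal.ofReal (p/c)) μ = ENNReal.ofReal (‖z‖^c) := by
    intro z
    rw [eLpNorm_norm_rpow _ hc, hmul, ← Lp.enorm_def, ← ofReal_norm,
      ENNReal.ofReal_rpow_of_nonneg (norm_nonneg _) hc.le]
  have hM : ∀ z : Lp ℂ (ENNReal.ofReal p) μ,
      MemLp (fun a => ‖z a‖^c) (ENNReal.ofReal (p/c)) μ := by
    intro z
    refine ⟨?_, by rw [hE]; simp⟩
    exact ((Lp.aestronglyMeasurable z).norm.aemeasurable.pow_const c).aestronglyMeasurable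
  have hS := (hM x).add (hM y)
  have hn : ∀ a, ‖((fun a => ‖x a‖^c) + fun a => ‖y a‖^c) a‖ = ‖x a‖^c + ‖y a‖^c := by
    intro a
    rw [Pi.add_apply, Real.norm_of_nonneg (by positivity)]
  constructor
  · have h := hS.integrable_norm_rpow (by simpa using hr0) (by simp)
    rw [ENNReal.toReal_ofReal hr0.le] at h
    simpa only [hn] using h
  · have h := hS.eLpNorm_eq_integral_rpow_norm (by simpa using hr0) (by simp)
    rw [ENNReal.toReal_ofReal hr0.le] at h
    simp only [hn] at h
    have h2 := eLpNorm_add_le (hM x).1 (hM y).1 (by simpa using hr : 1 ≤ ENNReal.ofReal (p/c))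
    rw [h, hE, hE, ← ENNReal.ofReal_add (by positivity) (by positivity),
      ENNReal.ofReal_le_ofReal_iff (by positivity)] at h2
    have hI : 0 ≤ ∫ a, (‖x a‖^c + ‖y a‖^c)^(p/c) ∂μ := integral_nonneg fun a => by positivity
    have := Real.rpow_le_rpow (by positivity) h2 hr0.le
    rwa [← Real.rpow_mul hI, inv_mul_cancel₀ hr0.ne', Real.rpow_one] at this

theorem aux_clarkson {α : Type*} [MeasurableSpace α] {μ : Measure α} (m : ℕ) (hm : 2 ≤ m) (p : ℝ)
    (hp1 : (m : ℝ) / ((m : ℝ) - 1) ≤ p) (hpm : p ≤ (m : ℝ)) [Fact (1 ≤ ENNReal.ofReal p)]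
    (x y : Lp ℂ (ENNReal.ofReal p) μ) :
    ‖x+y‖^m + ‖x-y‖^m ≤ 2 * (‖x‖^((m:ℝ)/((m:ℝ)-1)) + ‖y‖^((m:ℝ)/((m:ℝ)-1)))^(m-1) := by
  have hm2 : (2:ℝ) ≤ m := by exact_mod_cast hm
  have hm1 : (0:ℝ) < (m:ℝ) - 1 := by linarith
  set c := (m:ℝ)/((m:ℝ)-1) with hcdef
  have hc : 0 < c := by positivity
  have hp0 : 0 < p := by linarith
  set s := (m:ℝ)/p with hsdef
  have hs : 1 ≤ s := by rwa [hsdef, le_div_iff₀ hp0, one_mul]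
  have hs0 : 0 < s := by linarith
  have hcast : ((m-1:ℕ):ℝ) = (m:ℝ)-1 := by rw [Nat.cast_sub (by omega)]; simp
  have hpw : ∀ t : ℝ, 0 ≤ t → (t^p)^s = t^m := by
    intro t ht
    rw [← Real.rpow_mul ht, hsdef, mul_div_cancel₀ _ hp0.ne', Real.rpow_natCast]
  have hpw2 : ∀ t : ℝ, 0 ≤ t → (t^(m-1))^(1/s) = t^(p/c) := by
    intro t ht
    rw [← Real.rpow_natCast, ← Real.rpow_mul ht, hcast]
    congr 1
    rw [hsdef, hcdef]; field_simp
  obtain ⟨hI, hle⟩ := aux_mink2 hc hp1 x y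
  have h1 := aux_mink hs (fun a => ‖(x+y) a‖^p) (fun a => ‖(x-y) a‖^p) (aux_int hp0 _) (aux_int hp0 _)
    (fun a => by positivity) (fun a => by positivity)
  rw [← aux_norm hp0, ← aux_norm hp0, hpw _ (norm_nonneg _), hpw _ (norm_nonneg _)] at h1
  have h2 : ∫ a, ((‖(x+y) a‖^p)^s + (‖(x-y) a‖^p)^s)^(1/s) ∂μ ≤
      ∫ a, 2^(1/s) * (‖x a‖^c + ‖y a‖^c)^(p/c) ∂μ := by
    refine integral_mono_of_nonneg (Filter.Eventually.of_forall fun a => by positivity) (hI.const_mul _) ?_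
    filter_upwards [Lp.coeFn_add x y, Lp.coeFn_sub x y] with a ha hb
    beta_reduce
    rw [hpw _ (norm_nonneg _), hpw _ (norm_nonneg _), ha, hb, ← hpw2 _ (by positivity),
      ← Real.mul_rpow (by norm_num) (by positivity)]
    exact Real.rpow_le_rpow (by positivity) (aux_scalar m hm _ _) (by positivity)
  rw [integral_const_mul] at h2
  have h3 : (‖x+y‖^m + ‖x-y‖^m)^(1/s) ≤ (2 * (‖x‖^c+‖y‖^c)^(m-1))^(1/s) := by
    rw [Real.mul_rpow (by norm_num) (by positivity), hpw2 _ (by positivity)]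
    exact h1.trans (h2.trans (mul_le_mul_of_nonneg_left hle (by positivity)))
  exact (Real.rpow_le_rpow_iff (by positivity) (by positivity) (by positivity)).1 h3

theorem aux_coeff (P : Polynomial ℂ) (M k : ℕ) (hM : 0 < M) (hk : k < 2*M) (hP : P.natDegree < 2*M)
    (g : ℂ → ℝ) (B : ℝ) (hg : ∀ w : ℂ, ‖w‖ = 1 → ‖P.eval w‖ ≤ g w)
    (hB : ∀ w : ℂ, ‖w‖ = 1 → g w + g (-w) ≤ 2 * B) : ‖P.coeff k‖ ≤ B := by
  set N := 2*M with hN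
  have hN0 : N ≠ 0 := by omega
  have hprim := Complex.isPrimitiveRoot_exp N hN0
  set ζ := Complex.exp (2 * Real.pi * Complex.I / N) with hζ
  have hζN : ζ^N = 1 := hprim.pow_eq_one
  have hζ1 : ‖ζ‖ = 1 := Complex.norm_eq_one_of_pow_eq_one hζN hN0
  have hζ0 : ζ ≠ 0 := by intro h; rw [h] at hζ1; simp at hζ1
  have hζM : ζ^M = -1 := by
    have h1 : (ζ^M)^2 = 1 := by rw [← pow_mul, mul_comm, ← hN, hζN]
    rcases (sq_eq_sq_iff_eq_or_eq_neg.1 (h1.trans (one_pow 2).symm)) with h | h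
    · exact absurd h (hprim.pow_ne_one_of_pos_of_lt hM.ne' (by omega))
    · exact h
  have hsum : ∑ l ∈ Finset.range N, (ζ^(N-k))^l * P.eval (ζ^l) = N * P.coeff k := by
    simp only [Polynomial.eval_eq_sum_range' hP, Finset.mul_sum]
    rw [Finset.sum_comm]
    have : ∀ j ∈ Finset.range N, ∑ l ∈ Finset.range N, (ζ^(N-k))^l * (P.coeff j * (ζ^l)^j)
        = if j = k then N * P.coeff k else 0 := by
      intro j hj
      rw [Finset.mem_range] at hj
      have e : ∀ l, (ζ^(N-k))^l * (P.coeff j * (ζ^l)^j) = P.coeff j * (ζ^(N-k+j))^l := by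
        intro l; rw [pow_add, mul_pow, ← pow_mul, ← pow_mul, ← pow_mul]; ring
      simp only [e]
      rw [← Finset.mul_sum]
      split_ifs with hjk
      · subst hjk
        rw [Nat.sub_add_cancel hk.le, hζN]; simp [mul_comm]
      · have hne : ζ^(N-k+j) ≠ 1 := by
          intro h
          have hd := hprim.dvd_of_pow_eq_one _ h
          obtain ⟨t, ht⟩ := hd
          rcases t with _ | _ | t
          · omega
          · omega
          · have : N * (t+1+1) = N * t + 2 * N := by ring
            omega
        rw [geom_sum_eq hne, ← pow_mul, mul_comm (N-k+j), pow_mul, hζN]; simp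
    rw [Finset.sum_congr rfl this, Finset.sum_ite_eq']
    simp [hk]
  have hb : ‖(N:ℂ) * P.coeff k‖ ≤ ∑ l ∈ Finset.range N, g (ζ^l) := by
    rw [← hsum]
    refine (norm_sum_le _ _).trans (Finset.sum_le_sum fun l _ => ?_)
    rw [norm_mul, norm_pow, norm_pow, hζ1, one_pow, one_pow, one_mul]
    exact hg _ (by rw [norm_pow, hζ1, one_pow])
  have hc : ∑ l ∈ Finset.range N, g (ζ^l) ≤ N * B := by
    rw [hN, two_mul, Finset.sum_range_add, ← Finset.sum_add_distrib]
    have : ∑ l ∈ Finset.range M, (g (ζ^l) + g (ζ^(M+l))) ≤ ∑ l ∈ Finset.range M, 2 * B := by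
      refine Finset.sum_le_sum fun l _ => ?_
      rw [pow_add, hζM, neg_one_mul]
      exact hB _ (by rw [norm_pow, hζ1, one_pow])
    refine this.trans (le_of_eq ?_)
    simp; ring
  rw [norm_mul, Complex.norm_natCast] at hb
  have hNR : (0:ℝ) < N := by exact_mod_cast Nat.pos_of_ne_zero hN0
  exact le_of_mul_le_mul_left (hb.trans hc) hNR

theorem aux_poly {E : Type*} [NormedAddCommGroup E] [NormedSpace ℂ E] (m : ℕ)
    (L : ContinuousMultilinearMap ℂ (fun _ : Fin m => E) ℂ) (x y : E) :
    ∃ P : Polynomial ℂ, P.natDegree ≤ m ∧ ∀ w : ℂ, L (fun _ => x + w • y) = P.eval w := by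
  classical
  refine ⟨∑ s : Finset (Fin m), Polynomial.C (L (s.piecewise (fun _ => x) (fun _ => y))) *
    Polynomial.X^(m - s.card), ?_, ?_⟩
  · refine Polynomial.natDegree_sum_le_of_forall_le _ _ fun s _ => ?_
    exact (Polynomial.natDegree_C_mul_X_pow_le _ _).trans (Nat.sub_le _ _)
  · intro w
    have := L.map_add_univ (fun _ => x) (fun _ => w • y)
    rw [Pi.add_def] at this
    rw [this, Polynomial.eval_finsetSum]
    refine Finset.sum_congr rfl fun s _ => ?_
    have h := L.map_piecewise_smul (fun _ => w) (s.piecewise (fun _ => x) (fun _ => y)) sᶜ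
    have e : (sᶜ).piecewise (fun i => w • (s.piecewise (fun _ => x) (fun _ => y) : Fin m → E) i)
        (s.piecewise (fun _ => x) (fun _ => y)) = s.piecewise (fun _ => x) (fun _ => w • y) := by
      ext1 i
      by_cases hi : i ∈ s <;> simp [hi]
    rw [e] at h
    rw [h]
    simp only [Finset.prod_const, Finset.card_compl, Fintype.card_fin, smul_eq_mul,
      Polynomial.eval_mul, Polynomial.eval_C, Polynomial.eval_pow, Polynomial.eval_X]
    ring

theorem aux_deriv {E : Type*} [NormedAddCommGroup E] [NormedSpace ℂ E] (F : E → ℂ)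
    (hF : ContDiff ℂ ⊤ F) (x y : E) (P : Polynomial ℂ) (hP : ∀ w : ℂ, F (x + w • y) = P.eval w)
    (k : ℕ) : iteratedFDeriv ℂ k F x (fun _ => y) = k.factorial * P.coeff k := by
  have h1 : iteratedDeriv k (fun w : ℂ => F (x + w • y)) 0 = iteratedFDeriv ℂ k F x (fun _ => y) := by
    have hG : ContDiff ℂ ⊤ (fun z => F (x + z)) := hF.comp (contDiff_const.add contDiff_id)
    have h := ContinuousLinearMap.iteratedFDeriv_comp_right (ContinuousLinearMap.toSpanSingleton ℂ y) hG 0 (i := k) (by exact_mod_cast le_top)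
    rw [iteratedDeriv_eq_iteratedFDeriv]
    have e : (fun w : ℂ => F (x + w • y)) = (fun z => F (x+z)) ∘ (ContinuousLinearMap.toSpanSingleton ℂ y) := by
      ext w; simp
    rw [e, h, iteratedFDeriv_comp_add_left]
    simp
  have h2 : ∀ (k : ℕ), iteratedDeriv k (fun w : ℂ => P.eval w) = fun w => (Polynomial.derivative^[k] P).eval w := by
    intro k
    induction k with
    | zero => simp
    | succ k ih =>
      rw [iteratedDeriv_succ, ih]
      ext w
      rw [Polynomial.deriv, Function.iterate_succ_apply']
  rw [← h1, funext hP, h2]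
  beta_reduce
  rw [← Polynomial.coeff_zero_eq_eval_zero, Polynomial.coeff_iterate_derivative]
  simp [Nat.descFactorial_self]

/-- Bernstein-type inequality for an `m`-homogeneous polynomial on a complex `L_p(μ)`
space with `m' ≤ p ≤ m`, where `m' = m/(m-1)`: for `k ≤ m` and `‖x‖_p < 1`,
`‖D̂^k L̂(x)‖ ≤ k! (1 - ‖x‖_p^{m'})^(-k/m') ‖L̂‖`. -/
theorem bernstein_homogeneous_Lp_middle_p
    {α : Type*} [MeasurableSpace α] (μ : Measure α)
    (m k : ℕ) (hm : 2 ≤ m) (hk : k ≤ m) (p : ℝ)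
    (hp1 : (m : ℝ) / ((m : ℝ) - 1) ≤ p) (hpm : p ≤ (m : ℝ))
    [Fact (1 ≤ ENNReal.ofReal p)]
    (F : Lp ℂ (ENNReal.ofReal p) μ → ℂ)
    (hF : ∃ L : ContinuousMultilinearMap ℂ (fun _ : Fin m => Lp ℂ (ENNReal.ofReal p) μ) ℂ,
      (∀ (σ : Equiv.Perm (Fin m)) (v : Fin m → Lp ℂ (ENNReal.ofReal p) μ), L (v ∘ σ) = L v) ∧
      ∀ u, F u = L (fun _ => u))
    (x : Lp ℂ (ENNReal.ofReal p) μ) (hx : ‖x‖ < 1) :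
    sSup ((fun y => ‖iteratedFDeriv ℂ k F x (fun _ => y)‖)
        '' closedBall (0 : Lp ℂ (ENNReal.ofReal p) μ) 1)
      ≤ (k.factorial : ℝ)
          * (1 - ‖x‖ ^ ((m : ℝ) / ((m : ℝ) - 1))) ^ (-(k : ℝ) / ((m : ℝ) / ((m : ℝ) - 1)))
          * sSup ((fun y => ‖F y‖) '' closedBall (0 : Lp ℂ (ENNReal.ofReal p) μ) 1) := by
  obtain ⟨L, -, hL⟩ := hF
  have hm2 : (2:ℝ) ≤ m := by exact_mod_cast hm
  have hm1 : (0:ℝ) < (m:ℝ) - 1 := by linarith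
  have hFc : ContDiff ℂ ⊤ F := by
    have : F = L ∘ (fun u => fun _ : Fin m => u) := funext hL
    rw [this]
    exact L.contDiff.comp (contDiff_pi.2 fun _ => contDiff_id)
  set S := sSup ((fun y => ‖F y‖) '' closedBall (0 : Lp ℂ (ENNReal.ofReal p) μ) 1) with hS
  have hbdd : BddAbove ((fun y => ‖F y‖) '' closedBall (0 : Lp ℂ (ENNReal.ofReal p) μ) 1) := by
    refine ⟨‖L‖, ?_⟩
    rintro _ ⟨y, hy, rfl⟩
    rw [mem_closedBall_zero_iff] at hy
    simp only [hL]
    refine (L.le_opNorm _).trans ?_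
    simp only [Finset.prod_const]
    exact mul_le_of_le_one_right (norm_nonneg _) (pow_le_one₀ (norm_nonneg _) hy)
  have hS1 : ∀ y : Lp ℂ (ENNReal.ofReal p) μ, ‖y‖ ≤ 1 → ‖F y‖ ≤ S := fun y hy =>
    le_csSup hbdd ⟨y, mem_closedBall_zero_iff.2 hy, rfl⟩
  have hS0 : 0 ≤ S := (norm_nonneg _).trans (hS1 0 (by simp))
  have hhom : ∀ (t : ℂ) (y : Lp ℂ (ENNReal.ofReal p) μ), F (t • y) = t^m * F y := by
    intro t y
    rw [hL, hL]
    have := L.map_smul_univ (fun _ => t) (fun _ => y)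
    simpa using this
  have hFle : ∀ y : Lp ℂ (ENNReal.ofReal p) μ, ‖F y‖ ≤ S * ‖y‖^m := by
    intro y
    rcases eq_or_ne y 0 with rfl | hy
    · have := hhom 0 0
      rw [zero_smul, zero_pow (by omega), zero_mul] at this
      rw [this, norm_zero]; positivity
    · have hy0 : 0 < ‖y‖ := norm_pos_iff.2 hy
      have hne : (‖y‖ : ℂ) ≠ 0 := by exact_mod_cast hy0.ne'
      have h1 := hS1 ((‖y‖ : ℂ)⁻¹ • y) (by
        rw [norm_smul, norm_inv, Complex.norm_real, norm_norm, inv_mul_cancel₀ hy0.ne'])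
      have h2 := hhom (‖y‖ : ℂ) ((‖y‖ : ℂ)⁻¹ • y)
      rw [smul_inv_smul₀ hne] at h2
      rw [h2, norm_mul, norm_pow, Complex.norm_real, norm_norm, mul_comm]
      exact mul_le_mul_of_nonneg_right h1 (by positivity)
  set c := (m:ℝ)/((m:ℝ)-1) with hcdef
  have hc : 0 < c := by positivity
  have hx1 : ‖x‖^c < 1 := Real.rpow_lt_one (norm_nonneg _) hx hc
  set D := 1 - ‖x‖^c with hD
  have hD0 : 0 < D := by linarith
  set r := D^(1/c) with hr
  have hr0 : 0 < r := by positivity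
  have hrc : r^c = D := by rw [hr, ← Real.rpow_mul hD0.le, one_div_mul_cancel hc.ne', Real.rpow_one]
  have hrk : D^(-(k:ℝ)/c) = (r^k)⁻¹ := by
    rw [hr, ← Real.rpow_natCast, ← Real.rpow_mul hD0.le, ← Real.rpow_neg hD0.le]
    congr 1; ring
  refine csSup_le ((nonempty_closedBall.2 zero_le_one).image _) ?_
  rintro _ ⟨y, hy, rfl⟩
  rw [mem_closedBall_zero_iff] at hy
  beta_reduce
  obtain ⟨P, hPd, hP⟩ := aux_poly m L x ((r:ℂ) • y)
  have hP' : ∀ w : ℂ, F (x + w • ((r:ℂ) • y)) = P.eval w := fun w => by rw [hL, hP]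
  have hd := aux_deriv F hFc x ((r:ℂ) • y) P hP' k
  have hsm := (iteratedFDeriv ℂ k F x).map_smul_univ (fun _ => (r:ℂ)) (fun _ => y)
  rw [hd, Finset.prod_const, Finset.card_univ, Fintype.card_fin, smul_eq_mul] at hsm
  have hry : ‖(r:ℂ) • y‖ ≤ r := by
    rw [norm_smul, Complex.norm_real, Real.norm_of_nonneg hr0.le]
    exact mul_le_of_le_one_right hr0.le hy
  have hcoef : ‖P.coeff k‖ ≤ S := by
    refine aux_coeff P (m+1) k (by omega) (by omega) (by omega)
      (fun w => S * ‖x + w • ((r:ℂ) • y)‖^m) S (fun w _ => by rw [← hP']; exact hFle _) ?_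
    intro w hw
    have h := aux_clarkson m hm p hp1 hpm x (w • ((r:ℂ) • y))
    rw [norm_smul w, hw, one_mul, ← hcdef] at h
    have h1 : ‖x‖^c + ‖(r:ℂ) • y‖^c ≤ 1 := by
      have := Real.rpow_le_rpow (norm_nonneg _) hry hc.le
      rw [hrc] at this
      linarith
    have h2 : (‖x‖^c + ‖(r:ℂ) • y‖^c)^(m-1) ≤ 1 := pow_le_one₀ (by positivity) h1
    beta_reduce
    rw [neg_smul, ← sub_eq_add_neg, ← mul_add, mul_comm 2]
    exact mul_le_mul_of_nonneg_left (by linarith) hS0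
  have hn := congrArg norm hsm
  rw [norm_mul, norm_mul, norm_pow, Complex.norm_real, Real.norm_of_nonneg hr0.le,
    Complex.norm_natCast] at hn
  rw [hrk]
  have hrk0 : 0 < r^k := by positivity
  calc _ = (r^k)⁻¹ * (k.factorial * ‖P.coeff k‖) := by rw [hn]; field_simp
    _ ≤ (r^k)⁻¹ * (k.factorial * S) := by gcongr
    _ = _ := by ring
end

section
/- Let L̂ : L_p(μ) → ℂ be a continuous m-homogeneous polynomial, m ≥ 2, on a complex L_p(μ) space with m ≤ p ≤ ∞, and let p′ = p/(p−1). Then for every k ≤ m and every x ∈ L_p(μ) with ‖x‖_p < 1, ‖D̂^k L̂(x)‖ ≤ k! · (1−‖x‖_p^{p′})^{−k/p′} · ‖L̂‖. -/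
open Metric MeasureTheory
open scoped ENNReal

/-- The conjugate exponent `p' = p/(p-1)` of an extended-real exponent `p`
(with `p' = 1` for `p = ∞`), as a real number. -/
noncomputable def conjExp (p : ℝ≥0∞) : ℝ :=
  if p = ∞ then 1 else p.toReal / (p.toReal - 1)

lemma three_lines_aux (α β γ δ : ℂ) (hα : ‖α‖ ≤ 1) (hβ : ‖β‖ ≤ 1) (hγ : ‖γ‖ ≤ 1) (hδ : ‖δ‖ ≤ 1)
    (A B G H s : ℝ) (hA : 0 ≤ A) (hB : 0 ≤ B) (hG : 0 ≤ G) (hH : 0 ≤ H) (hAB : 0 < A + B)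
    (hGH : G + H ≤ 1) (hs : 1/2 ≤ s) (hs1 : s ≤ 1) :
    ‖γ * (G:ℂ)^(s:ℂ) * (α * (A:ℂ)^(s:ℂ) + β * (B:ℂ)^(s:ℂ))
      + δ * (H:ℂ)^(s:ℂ) * (α * (A:ℂ)^(s:ℂ) - β * (B:ℂ)^(s:ℂ))‖ ≤ 2^(1-s) * (A+B)^s := by
  set f : ℂ → ℂ := fun z => γ * (G:ℂ)^z * (α * (A:ℂ)^z + β * (B:ℂ)^z)
      + δ * (H:ℂ)^z * (α * (A:ℂ)^z - β * (B:ℂ)^z) with hf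
  have hn : ∀ (X : ℝ) (hX : 0 ≤ X) (c : ℂ) (hc : ‖c‖ ≤ 1) (z : ℂ), 1/2 ≤ z.re →
      ‖c * (X:ℂ)^z‖ ≤ X ^ z.re := by
    intro X hX c hc z hz
    rw [norm_mul, Complex.norm_cpow_eq_rpow_re_of_nonneg hX (by linarith)]
    exact mul_le_of_le_one_left (Real.rpow_nonneg hX _) hc
  have hbd : ∀ z : ℂ, 1/2 ≤ z.re → ‖f z‖ ≤ (G ^ z.re + H ^ z.re) * (A ^ z.re + B ^ z.re) := by
    intro z hz
    have h1 := hn A hA α hα z hz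
    have h2 := hn B hB β hβ z hz
    have h3 := hn G hG γ hγ z hz
    have h4 := hn H hH δ hδ z hz
    calc ‖f z‖ ≤ ‖γ * (G:ℂ)^z‖ * ‖α * (A:ℂ)^z + β * (B:ℂ)^z‖
          + ‖δ * (H:ℂ)^z‖ * ‖α * (A:ℂ)^z - β * (B:ℂ)^z‖ := by
          rw [← norm_mul, ← norm_mul]; exact norm_add_le _ _
      _ ≤ G ^ z.re * (A ^ z.re + B ^ z.re) + H ^ z.re * (A ^ z.re + B ^ z.re) := by
          gcongr
          · exact (norm_add_le _ _).trans (add_le_add h1 h2)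
          · exact (norm_sub_le _ _).trans (add_le_add h1 h2)
      _ = _ := by ring
  have hd : ∀ z : ℂ, z ≠ 0 → DifferentiableAt ℂ f z := by
    intro z hz
    have hX : ∀ X : ℂ, DifferentiableAt ℂ (fun z => X ^ z) z := fun X =>
      differentiableAt_id.const_cpow (Or.inr hz)
    simp only [hf]
    have h1 := hX A
    have h2 := hX B
    have h3 := hX G
    have h4 := hX H
    fun_prop
  have key := Complex.HadamardThreeLines.norm_le_interp_of_mem_verticalClosedStrip' (f := f)
    (z := (s:ℂ)) (a := (2*(A+B))^(1/2:ℝ)) (b := A+B) (l := 1/2) (u := 1) (by norm_num)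
    ⟨by simpa using hs, by simpa using hs1⟩ ?_ ?_ ?_ ?_
  · refine key.trans (le_of_eq ?_)
    rw [Complex.ofReal_re, ← Real.rpow_mul (by positivity), Real.mul_rpow (by norm_num) hAB.le, mul_assoc,
      ← Real.rpow_add hAB]
    congr 2 <;> ring
  · apply DifferentiableOn.diffContOnCl
    intro z hz
    have hz' : z ∈ Complex.re ⁻¹' (Set.Ici (1/2)) := by
      refine closure_minimal ?_ (isClosed_Ici.preimage Complex.continuous_re) hz
      intro w hw
      exact hw.1.le
    refine (hd z ?_).differentiableWithinAt
    rintro rfl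
    simp at hz'
    norm_num at hz'
  · refine ⟨(max 1 G + max 1 H) * (max 1 A + max 1 B), ?_⟩
    rintro _ ⟨z, hz, rfl⟩
    have e : ∀ X : ℝ, 0 ≤ X → X ^ z.re ≤ max 1 X := by
      intro X hX
      rcases le_total X 1 with h | h
      · exact (Real.rpow_le_one hX h (by linarith [hz.1])).trans (le_max_left _ _)
      · refine le_trans ?_ (le_max_right _ _)
        simpa using Real.rpow_le_rpow_of_exponent_le h hz.2
    refine (hbd z hz.1).trans ?_
    have := e A hA; have := e B hB; have := e G hG; have := e H hH
    gcongr
  · intro z hz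
    have hz : z.re = 1/2 := hz
    have h1 := hn A hA α hα z hz.ge
    have h2 := hn B hB β hβ z hz.ge
    have h3 := hn G hG γ hγ z hz.ge
    have h4 := hn H hH δ hδ z hz.ge
    rw [← Real.sqrt_eq_rpow]
    rw [hz, ← Real.sqrt_eq_rpow] at h1 h2 h3 h4
    set a := α * (A:ℂ)^z
    set b := β * (B:ℂ)^z
    have hpar : ‖a+b‖^2 + ‖a-b‖^2 ≤ 2*(A+B) := by
      have := parallelogram_law_with_norm ℝ a b
      have e1 : ‖a‖^2 ≤ A := by
        rw [← Real.sq_sqrt hA]; gcongr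
      have e2 : ‖b‖^2 ≤ B := by
        rw [← Real.sq_sqrt hB]; gcongr
      nlinarith
    apply Real.le_sqrt_of_sq_le
    have hle : ‖f z‖ ≤ √G * ‖a+b‖ + √H * ‖a-b‖ := by
      calc ‖f z‖ ≤ ‖γ * (G:ℂ)^z‖ * ‖a+b‖
          + ‖δ * (H:ℂ)^z‖ * ‖a-b‖ := by
            rw [← norm_mul, ← norm_mul]; exact norm_add_le _ _
        _ ≤ _ := by gcongr
    have hG2 := Real.sq_sqrt hG
    have hH2 := Real.sq_sqrt hH
    calc ‖f z‖^2 ≤ (√G * ‖a+b‖ + √H * ‖a-b‖)^2 := by gcongr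
      _ ≤ (√G^2 + √H^2) * (‖a+b‖^2 + ‖a-b‖^2) := by
        nlinarith [sq_nonneg (√G * ‖a-b‖ - √H * ‖a+b‖)]
      _ ≤ 1 * (2*(A+B)) := by
        rw [hG2, hH2]; gcongr
      _ = _ := by ring
  · intro z hz
    have hz : z.re = 1 := hz
    have := hbd z (by rw [hz]; norm_num)
    rw [hz] at this
    simp only [Real.rpow_one] at this
    nlinarith

lemma exists_phase (a : ℂ) : ∃ c : ℂ, ‖c‖ ≤ 1 ∧ a = c * ‖a‖ := by
  by_cases h : a = 0
  · exact ⟨0, by simp, by simp [h]⟩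
  · refine ⟨a / ‖a‖, ?_, ?_⟩
    · simp [h]
    · have : (‖a‖:ℂ) ≠ 0 := by simpa using h
      field_simp

lemma exists_phase' (a : ℂ) : ∃ c : ℂ, ‖c‖ ≤ 1 ∧ c * a = ‖a‖ := by
  by_cases h : a = 0
  · exact ⟨0, by simp, by simp [h]⟩
  · refine ⟨‖a‖ / a, ?_, ?_⟩
    · simp [h]
    · field_simp

lemma clarkson_scalar {p q : ℝ} (hpq : p.HolderConjugate q) (hp : 2 ≤ p) (a b : ℂ) :
    ‖a+b‖^p + ‖a-b‖^p ≤ 2 * (‖a‖^q + ‖b‖^q)^(p-1) := by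
  have hp0 : 0 < p := hpq.pos
  have hq0 : 0 < q := hpq.symm.pos
  have hinv := hpq.inv_add_inv_eq_one
  by_cases hab : ‖a‖^q + ‖b‖^q = 0
  · have h1 : 0 ≤ ‖a‖^q := by positivity
    have h2 : 0 ≤ ‖b‖^q := by positivity
    have h3 : ‖a‖^q = 0 := by linarith
    have h4 : ‖b‖^q = 0 := by linarith
    rw [Real.rpow_eq_zero (norm_nonneg _) hq0.ne', norm_eq_zero] at h3 h4
    subst h3; subst h4
    simp [Real.zero_rpow hp0.ne', Real.zero_rpow hq0.ne']
    positivity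
  have hpos : 0 < ‖a‖^q + ‖b‖^q := lt_of_le_of_ne (by positivity) (Ne.symm hab)
  obtain ⟨g, hg, hgeq⟩ := (NNReal.isGreatest_Lp (Finset.univ : Finset (Fin 2)) ![‖a+b‖₊, ‖a-b‖₊] hpq).1
  simp only [Fin.sum_univ_two, Set.mem_ofPred_eq, Matrix.cons_val_zero, Matrix.cons_val_one] at hg hgeq
  have hg' : (g 0 : ℝ)^q + (g 1:ℝ)^q ≤ 1 := by exact_mod_cast hg
  have hgeq' : ‖a+b‖ * g 0 + ‖a-b‖ * g 1 = (‖a+b‖^p + ‖a-b‖^p)^(1/p) := by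
    have := congrArg NNReal.toReal hgeq
    push_cast at this
    simpa using this
  obtain ⟨α, hα, hα'⟩ := exists_phase a
  obtain ⟨β, hβ, hβ'⟩ := exists_phase b
  obtain ⟨γ, hγ, hγ'⟩ := exists_phase' (a+b)
  obtain ⟨δ, hδ, hδ'⟩ := exists_phase' (a-b)
  have hq12 : 1/2 ≤ q⁻¹ := by
    have : p⁻¹ ≤ 2⁻¹ := by gcongr
    linarith
  have hq1 : q⁻¹ ≤ 1 := by
    have : 0 < p⁻¹ := by positivity
    linarith
  have key := three_lines_aux α β γ δ hα hβ hγ hδ (‖a‖^q) (‖b‖^q) ((g 0:ℝ)^q) ((g 1:ℝ)^q) q⁻¹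
    (by positivity) (by positivity) (by positivity) (by positivity) hpos hg' hq12 hq1
  have hc : ∀ X : ℝ, 0 ≤ X → (((X^q : ℝ) : ℂ)^((q⁻¹:ℝ):ℂ)) = (X:ℂ) := by
    intro X hX
    rw [← Complex.ofReal_cpow (by positivity), Real.rpow_rpow_inv hX hq0.ne']
  rw [hc _ (norm_nonneg _), hc _ (norm_nonneg _), hc _ (NNReal.coe_nonneg _),
    hc _ (NNReal.coe_nonneg _), ← hα', ← hβ'] at key
  have e : γ * ((g 0:ℝ):ℂ) * (a+b) + δ * ((g 1:ℝ):ℂ) * (a-b)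
      = ((‖a+b‖ * g 0 + ‖a-b‖ * g 1 : ℝ) : ℂ) := by
    push_cast
    rw [← hγ', ← hδ']; ring
  rw [e, hgeq', Complex.norm_real, Real.norm_of_nonneg (by positivity)] at key
  have k2 := Real.rpow_le_rpow (by positivity) key hp0.le
  rw [← Real.rpow_mul (by positivity), one_div_mul_cancel hp0.ne', Real.rpow_one,
    Real.mul_rpow (by positivity) (by positivity), ← Real.rpow_mul (by positivity),
    ← Real.rpow_mul (by positivity)] at k2
  have e1 : (1 - q⁻¹) * p = 1 := by
    rw [← hinv]; field_simp; linarith [hpq.mul_eq_add]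
  have e2 : q⁻¹ * p = p - 1 := by linarith
  rw [e1, e2, Real.rpow_one] at k2
  exact k2

lemma clarkson_Lp {α : Type*} [MeasurableSpace α] (μ : Measure α) (p : ℝ≥0∞) [Fact (1 ≤ p)]
    (hpt : p ≠ ∞) {q : ℝ} (hpq : p.toReal.HolderConjugate q) (hp : 2 ≤ p.toReal)
    (u v : Lp ℂ p μ) :
    ‖u+v‖^p.toReal + ‖u-v‖^p.toReal ≤ 2 * (‖u‖^q + ‖v‖^q)^(p.toReal-1) := by
  set P := p.toReal with hP
  have hP0 : 0 < P := hpq.pos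
  have hq0 : 0 < q := hpq.symm.pos
  have hp0 : p ≠ 0 := by rintro rfl; simp [hP] at hP0
  have hr0 : 0 < P - 1 := by linarith
  have hqr : q * (P - 1) = P := by have := hpq.mul_eq_add; linarith
  have hN : ∀ w : Lp ℂ p μ, ∫⁻ t, ‖w t‖ₑ ^ P ∂μ = ‖w‖ₑ ^ P := by
    intro w
    rw [Lp.enorm_def, eLpNorm_eq_eLpNorm' hp0 hpt, lintegral_rpow_enorm_eq_rpow_eLpNorm' hP0]
  have hpt' : ∀ a b : ℂ, ‖a+b‖ₑ^P + ‖a-b‖ₑ^P ≤ 2 * (‖a‖ₑ^q + ‖b‖ₑ^q)^(P-1) := by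
    intro a b
    have h := clarkson_scalar hpq hp a b
    have h' : ‖a+b‖₊^P + ‖a-b‖₊^P ≤ 2 * (‖a‖₊^q + ‖b‖₊^q)^(P-1) := by exact_mod_cast h
    have h'' : ((‖a+b‖₊^P + ‖a-b‖₊^P : NNReal) : ℝ≥0∞) ≤ ((2 * (‖a‖₊^q + ‖b‖₊^q)^(P-1) : NNReal) : ℝ≥0∞) :=
      ENNReal.coe_le_coe.2 h'
    simpa only [ENNReal.coe_add, ENNReal.coe_mul, ENNReal.coe_rpow_of_nonneg _ hP0.le,
      ENNReal.coe_rpow_of_nonneg _ hq0.le, ENNReal.coe_rpow_of_nonneg _ hr0.le, ENNReal.coe_ofNat,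
      enorm_eq_nnnorm] using h''
  have mu : AEMeasurable (fun t => ‖u t‖ₑ ^ q) μ := (Lp.aestronglyMeasurable u).enorm.pow_const _
  have mv : AEMeasurable (fun t => ‖v t‖ₑ ^ q) μ := (Lp.aestronglyMeasurable v).enorm.pow_const _
  have mink := ENNReal.lintegral_Lp_add_le mu mv (p := P - 1) (by linarith)
  simp only [Pi.add_apply, ← ENNReal.rpow_mul, hqr, hN] at mink
  have hPr : P * (1 / (P-1)) = q := by
    nth_rewrite 1 [← hqr]; field_simp
  rw [hPr] at mink
  have mink2 : ∫⁻ t, (‖u t‖ₑ^q + ‖v t‖ₑ^q)^(P-1) ∂μ ≤ (‖u‖ₑ^q + ‖v‖ₑ^q)^(P-1) := by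
    have := ENNReal.rpow_le_rpow mink hr0.le
    rwa [← ENNReal.rpow_mul, one_div_mul_cancel hr0.ne', ENNReal.rpow_one] at this
  have main : ‖u+v‖ₑ^P + ‖u-v‖ₑ^P ≤ 2 * (‖u‖ₑ^q + ‖v‖ₑ^q)^(P-1) := by
    calc ‖u+v‖ₑ^P + ‖u-v‖ₑ^P = ∫⁻ t, (‖(u+v) t‖ₑ^P + ‖(u-v) t‖ₑ^P) ∂μ := by
          rw [lintegral_add_left' ((Lp.aestronglyMeasurable _).enorm.pow_const _), hN, hN]
      _ ≤ ∫⁻ t, 2 * (‖u t‖ₑ^q + ‖v t‖ₑ^q)^(P-1) ∂μ := by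
          apply lintegral_mono_ae
          filter_upwards [Lp.coeFn_add u v, Lp.coeFn_sub u v] with t h1 h2
          rw [h1, h2]
          exact hpt' _ _
      _ = 2 * ∫⁻ t, (‖u t‖ₑ^q + ‖v t‖ₑ^q)^(P-1) ∂μ := by
          exact lintegral_const_mul' _ _ ENNReal.ofNat_ne_top
      _ ≤ _ := by gcongr
  have main' : ((‖u+v‖₊^P + ‖u-v‖₊^P : NNReal) : ℝ≥0∞) ≤ ((2 * (‖u‖₊^q + ‖v‖₊^q)^(P-1) : NNReal) : ℝ≥0∞) := by
    simpa only [ENNReal.coe_add, ENNReal.coe_mul, ENNReal.coe_rpow_of_nonneg _ hP0.le,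
      ENNReal.coe_rpow_of_nonneg _ hq0.le, ENNReal.coe_rpow_of_nonneg _ hr0.le, ENNReal.coe_ofNat,
      enorm_eq_nnnorm] using main
  have h := ENNReal.coe_le_coe.1 main'
  exact_mod_cast h

lemma conjExp_one_le (p : ℝ≥0∞) (h2 : 2 ≤ p) : 1 ≤ conjExp p := by
  unfold conjExp
  split_ifs with h
  · exact le_rfl
  · have : (2:ℝ) ≤ p.toReal := by
      have := ENNReal.toReal_mono h h2
      simpa using this
    rw [le_div_iff₀ (by linarith)]
    linarith

lemma pair_bound {α : Type*} [MeasurableSpace α] (μ : Measure α) (m : ℕ) (hm : 2 ≤ m)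
    (p : ℝ≥0∞) (hmp : (m : ℝ≥0∞) ≤ p) [Fact (1 ≤ p)] (u v : Lp ℂ p μ)
    (h : ‖u‖ ^ conjExp p + ‖v‖ ^ conjExp p ≤ 1) : ‖u+v‖^m + ‖u-v‖^m ≤ 2 := by
  by_cases hpt : p = ∞
  · have e : conjExp p = 1 := by simp [conjExp, hpt]
    rw [e, Real.rpow_one, Real.rpow_one] at h
    have h1 : ‖u+v‖^m ≤ 1 := pow_le_one₀ (norm_nonneg _) ((norm_add_le _ _).trans h)
    have h2 : ‖u-v‖^m ≤ 1 := pow_le_one₀ (norm_nonneg _) ((norm_sub_le _ _).trans h)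
    linarith
  have hmP : (m:ℝ) ≤ p.toReal := by
    have := ENNReal.toReal_mono hpt hmp
    simpa using this
  have hm2 : (2:ℝ) ≤ m := by exact_mod_cast hm
  have e : conjExp p = p.toReal / (p.toReal - 1) := by simp [conjExp, hpt]
  have hpq : p.toReal.HolderConjugate (conjExp p) := by
    rw [e]; exact Real.HolderConjugate.conjExponent (by linarith)
  have hc := clarkson_Lp μ p hpt hpq (by linarith) u v
  have h1 : (‖u‖ ^ conjExp p + ‖v‖ ^ conjExp p)^(p.toReal - 1) ≤ 1 :=
    Real.rpow_le_one (by positivity) h (by linarith)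
  have bern : ∀ a : ℝ, 0 ≤ a → 1 + p.toReal / m * (a^m - 1) ≤ a ^ p.toReal := by
    intro a ha
    have := one_add_mul_self_le_rpow_one_add (s := a^m - 1) (by have : 0 ≤ a^m := by positivity
                                                                linarith)
      (p := p.toReal / m) (by rw [le_div_iff₀ (by linarith)]; linarith)
    refine this.trans (le_of_eq ?_)
    rw [add_sub_cancel, ← Real.rpow_natCast, ← Real.rpow_mul ha]
    congr 1
    field_simp
  have b1 := bern _ (norm_nonneg (u+v))
  have b2 := bern _ (norm_nonneg (u-v))
  have hpos : 0 < p.toReal / m := by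
    apply div_pos <;> linarith
  by_contra hcon
  push Not at hcon
  nlinarith

/-- Bernstein-type inequality for an `m`-homogeneous polynomial on a complex `L_p(μ)`
space with `m ≤ p ≤ ∞`, where `p' = p/(p-1)`: for `k ≤ m` and `‖x‖_p < 1`,
`‖D̂^k L̂(x)‖ ≤ k! (1 - ‖x‖_p^{p'})^(-k/p') ‖L̂‖`. -/
theorem bernstein_homogeneous_Lp_large_p
    {α : Type*} [MeasurableSpace α] (μ : Measure α)
    (m k : ℕ) (hm : 2 ≤ m) (hk : k ≤ m) (p : ℝ≥0∞)
    (hmp : (m : ℝ≥0∞) ≤ p) [Fact (1 ≤ p)]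
    (F : Lp ℂ p μ → ℂ)
    (hF : ∃ L : ContinuousMultilinearMap ℂ (fun _ : Fin m => Lp ℂ p μ) ℂ,
      (∀ (σ : Equiv.Perm (Fin m)) (v : Fin m → Lp ℂ p μ), L (v ∘ σ) = L v) ∧
      ∀ u, F u = L (fun _ => u))
    (x : Lp ℂ p μ) (hx : ‖x‖ < 1) :
    sSup ((fun y => ‖iteratedFDeriv ℂ k F x (fun _ => y)‖) '' closedBall (0 : Lp ℂ p μ) 1)
      ≤ (k.factorial : ℝ) * (1 - ‖x‖ ^ conjExp p) ^ (-(k : ℝ) / conjExp p)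
          * sSup ((fun y => ‖F y‖) '' closedBall (0 : Lp ℂ p μ) 1) := by
  obtain ⟨L, -, hL⟩ := hF
  have h2p : 2 ≤ p := le_trans (by exact_mod_cast hm) hmp
  have hq1 := conjExp_one_le p h2p
  set q := conjExp p with hq
  set M := sSup ((fun y => ‖F y‖) '' closedBall (0 : Lp ℂ p μ) 1) with hM
  have hbdd : BddAbove ((fun y => ‖F y‖) '' closedBall (0 : Lp ℂ p μ) 1) := by
    refine ⟨‖L‖, ?_⟩
    rintro _ ⟨y, hy, rfl⟩
    have hy : ‖y‖ ≤ 1 := by simpa using hy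
    simp only [hL]
    refine (L.le_opNorm _).trans ?_
    simp only [Finset.prod_const]
    exact mul_le_of_le_one_right (norm_nonneg _) (pow_le_one₀ (norm_nonneg _) hy)
  have hball : ∀ y : Lp ℂ p μ, ‖y‖ ≤ 1 → ‖F y‖ ≤ M := fun y hy =>
    le_csSup hbdd ⟨y, by simpa using hy, rfl⟩
  have hM0 : 0 ≤ M := (norm_nonneg _).trans (hball 0 (by simp))
  have hhom : ∀ y : Lp ℂ p μ, ‖F y‖ ≤ M * ‖y‖^m := by
    intro y
    by_cases hy : y = 0
    · have : F y = 0 := by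
        rw [hL, hy]
        exact L.map_coord_zero (⟨0, by omega⟩ : Fin m) rfl
      rw [this, norm_zero]; positivity
    · have hy0 : 0 < ‖y‖ := norm_pos_iff.2 hy
      have h1 := hball (((‖y‖⁻¹ : ℝ) : ℂ) • y) (by
        rw [norm_smul, Complex.norm_real, norm_inv, norm_norm, inv_mul_cancel₀ hy0.ne'])
      rw [hL, L.map_smul_univ (fun _ => ((‖y‖⁻¹ : ℝ) : ℂ)) (fun _ => y), ← hL] at h1
      simp only [Finset.prod_const, Finset.card_univ, Fintype.card_fin, norm_smul, norm_pow,
        Complex.norm_real, norm_inv, norm_norm] at h1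
      rw [inv_pow, inv_mul_le_iff₀ (by positivity)] at h1
      linarith
  have hFeq : F = fun u => L (fun _ => u) := funext hL
  have hcd : ∀ n : ℕ, ContDiff ℂ n F := by
    intro n
    rw [hFeq]
    exact L.contDiff.comp (contDiff_pi.2 fun _ => contDiff_id)
  set s : ℝ := (1 - ‖x‖^q)^(1/q) with hs
  have hxq : ‖x‖^q < 1 := Real.rpow_lt_one (norm_nonneg _) hx (by linarith)
  have hs0 : 0 < s := Real.rpow_pos_of_pos (by linarith) _
  have hsq : s^q = 1 - ‖x‖^q := by
    rw [hs, ← Real.rpow_mul (by linarith), one_div_mul_cancel (by linarith), Real.rpow_one]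
  have hsk : (1 - ‖x‖^q)^(-(k:ℝ)/q) = (s^k)⁻¹ := by
    rw [← Real.rpow_natCast, ← Real.rpow_neg hs0.le, hs, ← Real.rpow_mul (by linarith)]
    congr 1; ring
  rw [hsk]
  apply csSup_le
  · exact ⟨_, 0, by simp, rfl⟩
  rintro _ ⟨y, hy, rfl⟩
  have hy : ‖y‖ ≤ 1 := by simpa using hy
  simp only
  set φ : ℂ → ℂ := fun t => F (x + t • y) with hφ
  have hφcd : ∀ n : ℕ, ContDiff ℂ n φ := by
    intro n
    exact (hcd n).comp (contDiff_const.add (contDiff_id.smul contDiff_const))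
  have hder : iteratedFDeriv ℂ k F x (fun _ => y) = iteratedDeriv k φ 0 := by
    have e1 : φ = (fun z => F (x + z)) ∘ (ContinuousLinearMap.toSpanSingleton ℂ y) := by
      ext t; simp [hφ]
    have hc : ContDiff ℂ k (fun z => F (x + z)) := (hcd k).comp (contDiff_const.add contDiff_id)
    rw [iteratedDeriv_eq_iteratedFDeriv, e1,
      ContinuousLinearMap.iteratedFDeriv_comp_right _ hc _ le_rfl, iteratedFDeriv_comp_add_left]
    simp
  rw [hder]
  set ψ : ℂ → ℂ := fun t => (1/2) * (φ t + (-1)^k * φ (-t)) with hψ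
  have hφn : ContDiff ℂ k (fun t => φ (-t)) := (hφcd k).comp contDiff_neg
  have hψd : iteratedDeriv k φ 0 = iteratedDeriv k ψ 0 := by
    rw [hψ, iteratedDeriv_const_mul_field, iteratedDeriv_fun_add (hφcd k).contDiffAt
      (contDiff_const.mul hφn).contDiffAt, iteratedDeriv_const_mul_field, iteratedDeriv_comp_neg]
    have : ((-1:ℂ)^k) * (-1)^k = 1 := by rw [← mul_pow]; simp
    rw [neg_zero, smul_eq_mul, ← mul_assoc, this]
    ring
  have hψdiff : Differentiable ℂ ψ := by
    have h1 : Differentiable ℂ φ := (hφcd 1).differentiable (by simp)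
    have h2 : Differentiable ℂ (fun t => φ (-t)) := h1.comp differentiable_neg
    exact (h1.add (h2.const_mul _)).const_mul _
  rw [hψd]
  refine (Complex.norm_iteratedDeriv_le_of_forall_mem_sphere_norm_le k hs0
    hψdiff.diffContOnCl (C := M) ?_).trans (le_of_eq ?_)
  · intro t ht
    have ht : ‖t‖ = s := by simpa using ht
    have hv : ‖t • y‖ ^ q ≤ 1 - ‖x‖^q := by
      rw [← hsq, norm_smul, ht]
      exact Real.rpow_le_rpow (by positivity) (mul_le_of_le_one_right hs0.le hy) (by linarith)
    have hpair := pair_bound μ m hm p hmp x (t • y) (by linarith)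
    have h1 := hhom (x + t • y)
    have h2 := hhom (x - t • y)
    have h3 : φ (-t) = F (x - t • y) := by simp [hφ, sub_eq_add_neg]
    calc ‖ψ t‖ ≤ 1/2 * (‖F (x + t • y)‖ + ‖F (x - t • y)‖) := by
          simp only [hψ]
          rw [norm_mul]
          have : ‖(1/2:ℂ)‖ = 1/2 := by norm_num
          rw [this]
          gcongr
          refine (norm_add_le _ _).trans (le_of_eq ?_)
          rw [h3]; simp [hφ]
      _ ≤ M := by nlinarith
  · field_simp
end

section
/- Let L̂ : L_p(μ) → ℝ be a continuous m-homogeneous polynomial, m ≥ 2, on a real L_p(μ) space, and let k ≤ m. Then sup_{‖x‖_p ≤ 1} ‖D̂^k L̂(x)‖ ≤ 2^{m−1} C_{k,m} ‖L̂‖, where C_{k,m} = k!·m^{m/p}/((m−k)^{(m−k)/p}·k^{k/p}) if 1 ≤ p ≤ m′, C_{k,m} = k!·m^{m/m′}/((m−k)^{(m−k)/m′}·k^{k/m′}) if m′ ≤ p ≤ m, and C_{k,m} = k!·m^{m/p′}/((m−k)^{(m−k)/p′}·k^{k/p′}) if m ≤ p ≤ ∞ (with m′ = m/(m−1), p′ =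 p/(p−1), and 0⁰ read as 1 when k = m). -/
open Metric MeasureTheory
open scoped ENNReal

/-- The Markov constant `C_{k,m} = k! m^{m/r} / ((m-k)^{(m-k)/r} k^{k/r})` with
regime exponent `r` (real powers, so `0⁰ = 1` when `k = m`). -/
noncomputable def markovC (k m : ℕ) (r : ℝ) : ℝ :=
  (k.factorial : ℝ) * (m : ℝ) ^ ((m : ℝ) / r)
    / (((m : ℝ) - (k : ℝ)) ^ (((m : ℝ) - (k : ℝ)) / r) * (k : ℝ) ^ ((k : ℝ) / r))

lemma mk_clark01 (q x : ℝ) (hq : 2 ≤ q) (hx : 0 < x) (hx1 : x ≤ 1) :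
    (1 + x) ^ q + (1 - x) ^ q ≤ 2 * (1 + x ^ (q / (q - 1))) ^ (q - 1) := by
  set f : ℝ → ℝ := fun a => (1 + a ^ (1 - q) * x) * (1 + a * x) ^ (q - 1)
    + (1 - a ^ (1 - q) * x) * (1 - a * x) ^ (q - 1) with hf
  set a0 : ℝ := x ^ (1 / (q - 1)) with ha0
  have hq1 : 0 < q - 1 := by linarith
  have ha0p : 0 < a0 := Real.rpow_pos_of_pos hx _
  have ha01 : a0 ≤ 1 := Real.rpow_le_one hx.le hx1 (by positivity)
  have hanti : AntitoneOn f (Set.Icc a0 1) := by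
    apply antitoneOn_of_hasDerivWithinAt_nonpos (convex_Icc a0 1) (f' := fun a =>
      (q - 1) * x * (1 - a ^ (-q)) * ((1 + a * x) ^ (q - 2) - (1 - a * x) ^ (q - 2)))
    · have h1 : ContinuousOn (fun a : ℝ => a ^ (1 - q)) (Set.Icc a0 1) :=
        ContinuousOn.rpow_const continuousOn_id
          (fun a ha => Or.inl (ha0p.trans_le ha.1).ne')
      have h2 : Continuous (fun a : ℝ => (1 + a * x) ^ (q - 1)) :=
        Continuous.rpow_const (by fun_prop) (fun a => Or.inr hq1.le)
      have h3 : Continuous (fun a : ℝ => (1 - a * x) ^ (q - 1)) :=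
        Continuous.rpow_const (by fun_prop) (fun a => Or.inr hq1.le)
      exact ((continuousOn_const.add (h1.mul continuousOn_const)).mul h2.continuousOn).add
        ((continuousOn_const.sub (h1.mul continuousOn_const)).mul h3.continuousOn)
    · intro a ha
      rw [interior_Icc] at ha
      have hap : 0 < a := ha0p.trans ha.1
      have h1 : 0 < 1 + a * x := by positivity
      have h2 : 0 < 1 - a * x := by nlinarith [ha.2]
      have d1 : HasDerivAt (fun a : ℝ => a ^ (1 - q)) ((1 - q) * a ^ (1 - q - 1)) a :=
        Real.hasDerivAt_rpow_const (Or.inl hap.ne')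
      have d2 : HasDerivAt (fun a : ℝ => (1 + a * x) ^ (q - 1))
          (x * (q - 1) * (1 + a * x) ^ (q - 1 - 1)) a := by
        have : HasDerivAt (fun a : ℝ => 1 + a * x) x a := by
          simpa using ((hasDerivAt_id a).mul_const x).const_add 1
        exact this.rpow_const (Or.inl h1.ne')
      have d3 : HasDerivAt (fun a : ℝ => (1 - a * x) ^ (q - 1))
          (-x * (q - 1) * (1 - a * x) ^ (q - 1 - 1)) a := by
        have : HasDerivAt (fun a : ℝ => 1 - a * x) (-x) a := by
          simpa using ((hasDerivAt_id a).mul_const x).const_sub 1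
        exact this.rpow_const (Or.inl h2.ne')
      have d := (((d1.mul_const x).const_add 1).mul d2).add (((d1.mul_const x).const_sub 1).mul d3)
      refine HasDerivAt.hasDerivWithinAt ?_
      refine HasDerivAt.congr_deriv d ?_
      have e1 : (1 + a * x) ^ (q - 1) = (1 + a * x) ^ (q - 2) * (1 + a * x) := by
        rw [← Real.rpow_add_one h1.ne']; congr 1; ring
      have e2 : (1 - a * x) ^ (q - 1) = (1 - a * x) ^ (q - 2) * (1 - a * x) := by
        rw [← Real.rpow_add_one h2.ne']; congr 1; ring
      have e3 : a ^ (1 - q) = a ^ (-q) * a := by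
        rw [← Real.rpow_add_one hap.ne']; congr 1; ring
      rw [e1, e2, e3, show q - 1 - 1 = q - 2 by ring, show 1 - q - 1 = -q by ring]
      ring
    · intro a ha
      rw [interior_Icc] at ha
      have hap : 0 < a := ha0p.trans ha.1
      have h2 : 0 < 1 - a * x := by nlinarith [ha.2]
      have h4 : 1 ≤ a ^ (-q) := Real.one_le_rpow_of_pos_of_le_one_of_nonpos hap ha.2.le (by linarith)
      have h5 : (1 - a * x) ^ (q - 2) ≤ (1 + a * x) ^ (q - 2) :=
        Real.rpow_le_rpow h2.le (by nlinarith) (by linarith)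
      have : (q - 1) * x * (1 - a ^ (-q)) ≤ 0 :=
        mul_nonpos_of_nonneg_of_nonpos (by positivity) (by linarith)
      exact mul_nonpos_of_nonpos_of_nonneg this (by linarith)
  have h := hanti (Set.left_mem_Icc.2 ha01) (Set.right_mem_Icc.2 ha01) ha01
  have e0 : a0 ^ (1 - q) * x = 1 := by
    rw [ha0, ← Real.rpow_mul hx.le, ← Real.rpow_add_one hx.ne']
    have : 1 / (q - 1) * (1 - q) + 1 = 0 := by field_simp; ring
    rw [this, Real.rpow_zero]
  have e1 : a0 * x = x ^ (q / (q - 1)) := by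
    rw [ha0, ← Real.rpow_add_one hx.ne']; congr 1; field_simp; ring
  have e2 : f a0 = 2 * (1 + x ^ (q / (q - 1))) ^ (q - 1) := by
    simp only [hf]; rw [e0, e1]; ring
  have e3 : f 1 = (1 + x) ^ q + (1 - x) ^ q := by
    simp only [hf, Real.one_rpow, one_mul]
    congr 1
    · have : (1 + x) ≠ 0 := by positivity
      conv_rhs => rw [show q = (q - 1) + 1 by ring, Real.rpow_add_one this]
      ring
    · by_cases h : 1 - x = 0
      · rw [h, Real.zero_rpow (by linarith : q ≠ 0)]; simp
      · conv_rhs => rw [show q = (q - 1) + 1 by ring, Real.rpow_add_one h]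
        ring
  linarith

lemma mk_clark_nn (q a b : ℝ) (hq : 2 ≤ q) (hb : 0 ≤ b) (hab : b ≤ a) :
    (a + b) ^ q + (a - b) ^ q ≤ 2 * (a ^ (q / (q - 1)) + b ^ (q / (q - 1))) ^ (q - 1) := by
  have hq1 : 0 < q - 1 := by linarith
  have hq' : q / (q - 1) ≠ 0 := by positivity
  have key : ∀ t : ℝ, 0 ≤ t → (t ^ (q / (q - 1))) ^ (q - 1) = t ^ q := fun t ht => by
    rw [← Real.rpow_mul ht]; congr 1; field_simp
  rcases hb.eq_or_lt with rfl | hb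
  · rw [Real.zero_rpow hq', add_zero, sub_zero, add_zero, key a hab]; linarith
  · have ha : 0 < a := hb.trans_le hab
    have h := mk_clark01 q (b / a) hq (by positivity) (by rw [div_le_one ha]; exact hab)
    have h0 : 0 ≤ 1 - b / a := by rw [sub_nonneg, div_le_one ha]; exact hab
    have h1 : (a + b) ^ q = a ^ q * (1 + b / a) ^ q := by
      rw [← Real.mul_rpow ha.le (by positivity)]; congr 1; field_simp
    have h2 : (a - b) ^ q = a ^ q * (1 - b / a) ^ q := by
      rw [← Real.mul_rpow ha.le h0]; congr 1; field_simp
    have h3 : (a ^ (q / (q - 1)) + b ^ (q / (q - 1))) ^ (q - 1)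
        = a ^ q * (1 + (b / a) ^ (q / (q - 1))) ^ (q - 1) := by
      rw [← key a ha.le, ← Real.mul_rpow (by positivity) (by positivity), mul_add, mul_one,
        ← Real.mul_rpow ha.le (by positivity)]
      congr 4; field_simp
    rw [h1, h2, h3]
    have := Real.rpow_pos_of_pos ha q
    nlinarith

lemma mk_clark (q a b : ℝ) (hq : 2 ≤ q) :
    |a + b| ^ q + |a - b| ^ q ≤ 2 * (|a| ^ (q / (q - 1)) + |b| ^ (q / (q - 1))) ^ (q - 1) := by
  have main : ∀ a b : ℝ, |b| ≤ |a| →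
      |a + b| ^ q + |a - b| ^ q ≤ 2 * (|a| ^ (q / (q - 1)) + |b| ^ (q / (q - 1))) ^ (q - 1) := by
    intro a b h
    have h1 := mk_clark_nn q |a| |b| hq (abs_nonneg b) h
    have : |a + b| ^ q + |a - b| ^ q = (|a| + |b|) ^ q + (|a| - |b|) ^ q := by
      rcases abs_cases a with ⟨ha, ha'⟩ | ⟨ha, ha'⟩ <;> rcases abs_cases b with ⟨hb, hb'⟩ | ⟨hb, hb'⟩ <;>
        rw [ha, hb] at h ⊢
      · rw [abs_of_nonneg (by linarith), abs_of_nonneg (by linarith)]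
      · rw [abs_of_nonneg (by linarith), abs_of_nonneg (by linarith), add_comm]; ring_nf
      · rw [abs_of_nonpos (by linarith), abs_of_nonpos (by linarith), add_comm]; ring_nf
      · rw [abs_of_nonpos (by linarith), abs_of_nonpos (by linarith)]; ring_nf
    rw [this]; exact h1
  rcases le_total |b| |a| with h | h
  · exact main a b h
  · have := main b a h
    rw [abs_sub_comm b a, add_comm b a] at this
    rw [add_comm (|a| ^ (q / (q - 1)))]
    exact this

lemma mk_holder2 (A B u v P q : ℝ) (hA : 0 ≤ A) (hB : 0 ≤ B) (hu : 0 ≤ u) (hv : 0 ≤ v)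
    (hP : 0 < P) (hPq : P ≤ q) :
    A ^ (q - P) * u ^ P + B ^ (q - P) * v ^ P
      ≤ (A ^ q + B ^ q) ^ (1 - P / q) * (u ^ q + v ^ q) ^ (P / q) := by
  have hq : 0 < q := hP.trans_le hPq
  rcases hPq.eq_or_lt with rfl | hlt
  · simp [div_self hP.ne']
  · have hc : (q / (q - P)).HolderConjugate (q / P) := by
      have : 0 < q - P := by linarith
      rw [Real.holderConjugate_iff]
      constructor
      · rw [one_lt_div this]; linarith
      · field_simp; ring
    have h := Real.inner_le_Lp_mul_Lq (Finset.univ) ![A ^ (q - P), B ^ (q - P)] ![u ^ P, v ^ P] hc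
    have hqp : q - P ≠ 0 := by linarith
    have e1 : ∀ t : ℝ, 0 ≤ t → |t ^ (q - P)| ^ (q / (q - P)) = t ^ q := fun t ht => by
      rw [abs_of_nonneg (by positivity), ← Real.rpow_mul ht]; congr 1; field_simp
    have e2 : ∀ t : ℝ, 0 ≤ t → |t ^ P| ^ (q / P) = t ^ q := fun t ht => by
      rw [abs_of_nonneg (by positivity), ← Real.rpow_mul ht]; congr 1; field_simp
    simp only [Fin.sum_univ_two, Matrix.cons_val_zero, Matrix.cons_val_one] at h
    rw [e1 A hA, e1 B hB, e2 u hu, e2 v hv] at h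
    convert h using 3
    · field_simp
    · field_simp

/-- the combined pointwise inequality -/
lemma mk_pointwise (A B f g P q : ℝ) (hA : 0 ≤ A) (hB : 0 ≤ B)
    (hP : 0 < P) (hPq : P ≤ q) (hq : 2 ≤ q) :
    A ^ (q - P) * |f + g| ^ P + B ^ (q - P) * |f - g| ^ P
      ≤ (A ^ q + B ^ q) ^ (1 - P / q) * 2 ^ (P / q) *
        (|f| ^ (q / (q - 1)) + |g| ^ (q / (q - 1))) ^ (P / (q / (q - 1))) := by
  refine (mk_holder2 A B _ _ P q hA hB (abs_nonneg (f + g)) (abs_nonneg (f - g)) hP hPq).trans ?_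
  rw [mul_assoc]
  refine mul_le_mul_of_nonneg_left ?_ (by positivity)
  have hq0 : 0 < q - 1 := by linarith
  have h := Real.rpow_le_rpow (by positivity) (mk_clark q f g hq) (z := P / q) (by positivity)
  rw [Real.mul_rpow (by positivity) (by positivity), ← Real.rpow_mul (by positivity)] at h
  rwa [show P / (q / (q - 1)) = (q - 1) * (P / q) by field_simp]

/-- upper pointwise bound, `P ≤ s` -/
lemma mk_up1 (u v P s : ℝ) (hu : 0 ≤ u) (hv : 0 ≤ v) (hP : 0 < P) (hPs : P ≤ s) :
    (u ^ s + v ^ s) ^ (P / s) ≤ u ^ P + v ^ P := by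
  have h := Real.rpow_le_rpow (by positivity) (Real.rpow_add_rpow_le hu hv hP hPs) hP.le
  rw [← Real.rpow_mul (by positivity), ← Real.rpow_mul (by positivity)] at h
  convert h using 1
  · congr 1; ring
  · rw [one_div_mul_cancel hP.ne', Real.rpow_one]

/-- upper pointwise bound, `s ≤ P` -/
lemma mk_up2 (u v P s x y : ℝ) (hu : 0 ≤ u) (hv : 0 ≤ v) (hx : 0 < x) (hy : 0 < y)
    (hs : 0 < s) (hPs : s ≤ P) :
    (u ^ s + v ^ s) ^ (P / s) ≤ (x ^ s + y ^ s) ^ (P / s) *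
      (x ^ s / (x ^ s + y ^ s) * (x ^ P)⁻¹ * u ^ P + y ^ s / (x ^ s + y ^ s) * (y ^ P)⁻¹ * v ^ P) := by
  have hxs := Real.rpow_pos_of_pos hx s
  have hys := Real.rpow_pos_of_pos hy s
  have h := (convexOn_rpow (p := P / s) (by rwa [one_le_div hs])).2
    (show u ^ s / x ^ s ∈ Set.Ici (0:ℝ) from by simp only [Set.mem_Ici]; positivity)
    (show v ^ s / y ^ s ∈ Set.Ici (0:ℝ) from by simp only [Set.mem_Ici]; positivity)
    (show 0 ≤ x ^ s / (x ^ s + y ^ s) by positivity)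
    (show 0 ≤ y ^ s / (x ^ s + y ^ s) by positivity) (by field_simp)
  simp only [smul_eq_mul] at h
  have e : ∀ t z : ℝ, 0 ≤ t → 0 < z → (t ^ s / z ^ s) ^ (P / s) = (z ^ P)⁻¹ * t ^ P := by
    intro t z ht hz
    rw [← Real.div_rpow ht hz.le, ← Real.rpow_mul (by positivity), mul_div_cancel₀ _ hs.ne',
      Real.div_rpow ht hz.le]; ring
  rw [e u x hu hx, e v y hv hy] at h
  have e2 : u ^ s + v ^ s = (x ^ s + y ^ s) * (x ^ s / (x ^ s + y ^ s) * (u ^ s / x ^ s)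
      + y ^ s / (x ^ s + y ^ s) * (v ^ s / y ^ s)) := by field_simp
  rw [e2, Real.mul_rpow (by positivity) (by positivity)]
  refine mul_le_mul_of_nonneg_left (h.trans (le_of_eq (by ring))) (by positivity)

lemma mk_norm_rpow {α : Type*} [MeasurableSpace α] (μ : Measure α) (p : ℝ≥0∞) [hp : Fact (1 ≤ p)]
    (htop : p ≠ ∞) (f : Lp ℝ p μ) : ∫ x, |f x| ^ p.toReal ∂μ = ‖f‖ ^ p.toReal := by
  have h0 : p ≠ 0 := (zero_lt_one.trans_le hp.out).ne'
  have hP : p.toReal ≠ 0 := (ENNReal.toReal_pos h0 htop).ne'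
  have hnn : 0 ≤ ∫ x, ‖f x‖ ^ p.toReal ∂μ := integral_nonneg (fun x => by positivity)
  rw [Lp.norm_def, (Lp.memLp f).eLpNorm_eq_integral_rpow_norm h0 htop,
    ENNReal.toReal_ofReal (by positivity), ← Real.rpow_mul hnn, inv_mul_cancel₀ hP, Real.rpow_one]
  rfl

lemma mk_integrable {α : Type*} [MeasurableSpace α] (μ : Measure α) (p : ℝ≥0∞) [hp : Fact (1 ≤ p)]
    (htop : p ≠ ∞) (f : Lp ℝ p μ) : Integrable (fun x => |f x| ^ p.toReal) μ := by
  have h0 : p ≠ 0 := (zero_lt_one.trans_le hp.out).ne'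
  exact (Lp.memLp f).integrable_norm_rpow h0 htop

lemma mk_lift {α : Type*} [MeasurableSpace α] (μ : Measure α) (p : ℝ≥0∞) [hp : Fact (1 ≤ p)]
    (htop : p ≠ ∞) (a b : Lp ℝ p μ) (c1 c2 d1 d2 : ℝ)
    (h : ∀ f g : ℝ, c1 * |f + g| ^ p.toReal + c2 * |f - g| ^ p.toReal
      ≤ d1 * |f| ^ p.toReal + d2 * |g| ^ p.toReal) :
    c1 * ‖a + b‖ ^ p.toReal + c2 * ‖a - b‖ ^ p.toReal
      ≤ d1 * ‖a‖ ^ p.toReal + d2 * ‖b‖ ^ p.toReal := by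
  have I := fun f => mk_integrable μ p htop f
  simp only [← mk_norm_rpow μ p htop]
  simp only [← integral_const_mul]
  rw [← integral_add ((I _).const_mul _) ((I _).const_mul _),
    ← integral_add ((I _).const_mul _) ((I _).const_mul _)]
  refine integral_mono_ae (((I _).const_mul _).add ((I _).const_mul _))
    (((I _).const_mul _).add ((I _).const_mul _)) ?_
  filter_upwards [Lp.coeFn_add a b, Lp.coeFn_sub a b] with x h1 h2
  simp only [h1, h2, Pi.add_apply, Pi.sub_apply]
  exact h (a x) (b x)

lemma mk_norm {α : Type*} [MeasurableSpace α] (μ : Measure α) (p : ℝ≥0∞) [hp : Fact (1 ≤ p)]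
    (htop : p ≠ ∞) (a b : Lp ℝ p μ) (q s : ℝ) (hq : 2 ≤ q) (hpq : p.toReal ≤ q)
    (hs : (s = p.toReal ∧ p.toReal ≤ q / (q - 1)) ∨ (s = q / (q - 1) ∧ q / (q - 1) ≤ p.toReal)) :
    ‖a + b‖ ^ q + ‖a - b‖ ^ q ≤ 2 * (‖a‖ ^ s + ‖b‖ ^ s) ^ (q / s) := by
  have h0 : p ≠ 0 := (zero_lt_one.trans_le hp.out).ne'
  have hP : 0 < p.toReal := ENNReal.toReal_pos h0 htop
  have hq0 : 0 < q := by linarith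
  have hq1 : 0 < q - 1 := by linarith
  have hs0 : 0 < s := by
    rcases hs with ⟨rfl, _⟩ | ⟨rfl, _⟩ <;> positivity
  have key0 : ∀ t : ℝ, 0 ≤ t → (t ^ s) ^ (q / s) = t ^ q := fun t ht => by
    rw [← Real.rpow_mul ht]; congr 1; field_simp
  by_cases ha : a = 0
  · subst ha
    simp only [zero_add, zero_sub, norm_neg, norm_zero, Real.zero_rpow hs0.ne']
    rw [key0 _ (norm_nonneg b)]; linarith
  by_cases hb : b = 0
  · subst hb
    simp only [add_zero, sub_zero, norm_zero, Real.zero_rpow hs0.ne']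
    rw [key0 _ (norm_nonneg a)]; linarith
  have ha' : 0 < ‖a‖ := norm_pos_iff.2 ha
  have hb' : 0 < ‖b‖ := norm_pos_iff.2 hb
  set A := ‖a + b‖
  set B := ‖a - b‖
  have hA : 0 ≤ A := norm_nonneg _
  have hB : 0 ≤ B := norm_nonneg _
  set P := p.toReal with hPdef
  set N := A ^ q + B ^ q with hN
  have hN0 : 0 ≤ N := by positivity
  set K := (‖a‖ ^ s + ‖b‖ ^ s) ^ (P / s) with hK
  set D := N ^ (1 - P / q) * 2 ^ (P / q) with hD
  have hD0 : 0 ≤ D := by positivity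
  have main : N ≤ D * K := by
    have eN : N = A ^ (q - P) * A ^ P + B ^ (q - P) * B ^ P := by
      rw [← Real.rpow_add_of_nonneg hA (by linarith) hP.le,
        ← Real.rpow_add_of_nonneg hB (by linarith) hP.le, sub_add_cancel]
    rcases hs with ⟨hsP, hle⟩ | ⟨hsq, hle⟩
    · have := mk_lift μ p htop a b (A ^ (q - P)) (B ^ (q - P)) D D (fun f g => by
        refine (mk_pointwise A B f g P q hA hB hP hpq hq).trans ?_
        rw [← mul_add]
        exact mul_le_mul_of_nonneg_left (mk_up1 _ _ _ _ (abs_nonneg f) (abs_nonneg g) hP hle) hD0)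
      rw [eN]
      refine this.trans (le_of_eq ?_)
      rw [hK, hsP, div_self hP.ne', Real.rpow_one]; ring
    · have := mk_lift μ p htop a b (A ^ (q - P)) (B ^ (q - P))
        (D * (K * (‖a‖ ^ s / (‖a‖ ^ s + ‖b‖ ^ s) * (‖a‖ ^ P)⁻¹)))
        (D * (K * (‖b‖ ^ s / (‖a‖ ^ s + ‖b‖ ^ s) * (‖b‖ ^ P)⁻¹))) (fun f g => by
        refine (mk_pointwise A B f g P q hA hB hP hpq hq).trans ?_
        rw [← hsq]
        refine (mul_le_mul_of_nonneg_left (mk_up2 _ _ P s ‖a‖ ‖b‖ (abs_nonneg f) (abs_nonneg g)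
          ha' hb' hs0 (hsq ▸ hle)) hD0).trans (le_of_eq ?_)
        ring)
      rw [eN]
      refine this.trans (le_of_eq ?_)
      have h1 := (Real.rpow_pos_of_pos ha' P).ne'
      have h2 := (Real.rpow_pos_of_pos hb' P).ne'
      have h3 : ‖a‖ ^ s + ‖b‖ ^ s ≠ 0 := by positivity
      rw [← hPdef]
      field_simp
  have fin : N ^ (P / q) ≤ 2 ^ (P / q) * K := by
    rcases hN0.eq_or_lt with h | h
    · rw [← h, Real.zero_rpow (by positivity)]; positivity
    · have e : N ^ (1 - P / q) = N / N ^ (P / q) := by rw [Real.rpow_sub h, Real.rpow_one]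
      have h5 := Real.rpow_pos_of_pos h (P / q)
      rw [hD, e, mul_assoc, div_mul_eq_mul_div, le_div_iff₀ h5] at main
      exact le_of_mul_le_mul_left main h
  have := Real.rpow_le_rpow (by positivity) fin (z := q / P) (by positivity)
  rw [Real.mul_rpow (by positivity) (by positivity), ← Real.rpow_mul hN0,
    ← Real.rpow_mul (by norm_num), hK, ← Real.rpow_mul (by positivity)] at this
  rw [show P / q * (q / P) = 1 by field_simp, show P / s * (q / P) = q / s by field_simp,
    Real.rpow_one, Real.rpow_one] at this
  exact this

lemma mk_expand {E : Type*} [NormedAddCommGroup E] [NormedSpace ℝ E] (m : ℕ)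
    (L : ContinuousMultilinearMap ℝ (fun _ : Fin m => E) ℝ) (x y : E) :
    ∃ c : ℕ → ℝ, ∀ s t : ℝ, L (fun _ => s • x + t • y) =
      ∑ i ∈ Finset.range (m + 1), c i * (s ^ (m - i) * t ^ i) := by
  refine ⟨fun i => ∑ S ∈ (Finset.univ : Finset (Finset (Fin m))).filter (fun S => Sᶜ.card = i),
    L (S.piecewise (fun _ => x) (fun _ => y)), fun s t => ?_⟩
  have h1 : L (fun _ => s • x + t • y) = ∑ S : Finset (Fin m),
      L (S.piecewise (fun _ => s • x) (fun _ => t • y)) :=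
    L.toMultilinearMap.map_add_univ (fun _ => s • x) (fun _ => t • y)
  have h2 : ∀ S : Finset (Fin m), L (S.piecewise (fun _ => s • x) (fun _ => t • y)) =
      L (S.piecewise (fun _ => x) (fun _ => y)) * (s ^ (m - Sᶜ.card) * t ^ Sᶜ.card) := by
    intro S
    have := L.toMultilinearMap.map_smul_univ (fun i => if i ∈ S then s else t)
      (S.piecewise (fun _ => x) (fun _ => y))
    have e : (S.piecewise (fun _ => s • x) (fun _ => t • y) : Fin m → E) =
      fun i => (if i ∈ S then s else t) • (S.piecewise (fun _ => x) (fun _ => y) : Fin m → E) i := by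
      ext i; by_cases h : i ∈ S <;> simp [h]
    rw [e]
    refine this.trans ?_
    have hc : m - Sᶜ.card = S.card := by
      have := Finset.card_le_univ S
      rw [Finset.card_compl]; simp at this ⊢; omega
    rw [hc, Finset.prod_ite, Finset.prod_const, Finset.prod_const, smul_eq_mul, mul_comm]
    congr 3
    · congr 1; simp
    · congr 1; ext i; simp
  rw [h1, Finset.sum_congr rfl (fun S _ => h2 S)]
  simp only [Finset.sum_mul]
  rw [← Finset.sum_fiberwise_of_maps_to (t := Finset.range (m + 1)) (g := fun S => Sᶜ.card)]
  · refine Finset.sum_congr rfl fun i hi => Finset.sum_congr rfl fun S hS => ?_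
    rw [Finset.mem_filter] at hS
    rw [hS.2]
  · intro S _
    have := Finset.card_le_univ Sᶜ
    simp at this ⊢; omega

lemma mk_deriv {E : Type*} [NormedAddCommGroup E] [NormedSpace ℝ E] (m k : ℕ) (hk : k ≤ m)
    (F : E → ℝ) (hF : ContDiff ℝ ⊤ F) (x y : E) (c : ℕ → ℝ)
    (h : ∀ s t : ℝ, F (s • x + t • y) = ∑ i ∈ Finset.range (m + 1), c i * (s ^ (m - i) * t ^ i)) :
    iteratedFDeriv ℝ k F x (fun _ => y) = k.factorial * c k := by
  have hG : ContDiff ℝ ⊤ (fun z => F (x + z)) := hF.comp (by fun_prop)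
  have h1 := ((ContinuousLinearMap.id ℝ ℝ).smulRight y).iteratedFDeriv_comp_right hG (0 : ℝ)
    (i := k) le_top
  have h2 : iteratedDeriv k (fun t : ℝ => ∑ i ∈ Finset.range (m + 1), c i * t ^ i) 0
      = iteratedFDeriv ℝ k F x (fun _ => y) := by
    rw [iteratedDeriv_eq_iteratedFDeriv]
    have e : (fun t : ℝ => ∑ i ∈ Finset.range (m + 1), c i * t ^ i) =
      (fun z => F (x + z)) ∘ ((ContinuousLinearMap.id ℝ ℝ).smulRight y) := by
      ext t
      have := h 1 t
      simp only [one_smul, one_pow, one_mul] at this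
      simp [this]
    rw [e, h1, ContinuousMultilinearMap.compContinuousLinearMap_apply,
      iteratedFDeriv_comp_add_left]
    simp
  rw [← h2, iteratedDeriv_fun_sum (fun i _ => by fun_prop)]
  rw [Finset.sum_eq_single_of_mem k (by simp; omega)]
  · rw [iteratedDeriv_const_mul_field, iteratedDeriv_fun_pow_zero]; simp; ring
  · intro i _ hik
    rw [iteratedDeriv_const_mul_field, iteratedDeriv_fun_pow_zero]; simp [hik.symm]

lemma mk_geom (N d : ℕ) (hd : 0 < d) (hdN : d < N) :
    ∑ l ∈ Finset.range N, Complex.exp (2 * Real.pi * Complex.I / N) ^ (d * l) = 0 := by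
  have hN : N ≠ 0 := by omega
  have hz := Complex.isPrimitiveRoot_exp N hN
  simp only [pow_mul]
  have h1 := mul_neg_geom_sum (Complex.exp (2 * Real.pi * Complex.I / N) ^ d) N
  rw [← pow_mul, mul_comm d N, pow_mul, hz.pow_eq_one, one_pow, sub_self] at h1
  refine (mul_eq_zero.1 h1).resolve_left (sub_ne_zero.2 ?_)
  intro h
  exact hz.pow_ne_one_of_pos_of_lt hd.ne' hdN h.symm

lemma mk_cos_sum (N d : ℕ) (hd : 0 < d) (hdN : d < N) :
    ∑ l ∈ Finset.range N, Real.cos (d * (2 * Real.pi * l / N)) = 0 := by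
  have h := congrArg Complex.re (mk_geom N d hd hdN)
  rw [Complex.re_sum, Complex.zero_re] at h
  rw [← h]
  refine Finset.sum_congr rfl fun l _ => ?_
  rw [← Complex.exp_nat_mul, ← Complex.exp_ofReal_mul_I_re]
  congr 2
  push_cast
  ring

/-- discrete polarisation of a product of cosines -/
lemma mk_cos_prod (m : ℕ) (hm : 0 < m) (a : Fin m → ℝ) :
    ∑ j ∈ Finset.range m, (-1 : ℝ) ^ j * ∏ i, Real.cos (Real.pi * j / m - a i)
      = m * 2 / 2 ^ m * Real.cos (∑ i, a i) := by
  have hm' : (m : ℂ) ≠ 0 := by exact_mod_cast hm.ne'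
  set z := Complex.exp (2 * Real.pi * Complex.I / m) with hz
  have term : ∀ j : ℕ, ((-1 : ℂ) ^ j * ∏ i, Complex.cos (Real.pi * j / m - a i)) =
      ∑ S : Finset (Fin m), 1 / 2 ^ m * (z ^ (S.card * j) *
        ((∏ i ∈ S, Complex.exp (- a i * Complex.I)) * ∏ i ∈ Sᶜ, Complex.exp (a i * Complex.I))) := by
    intro j
    set w := Complex.exp (Real.pi * j / m * Complex.I) with hw
    have hwm : (-1 : ℂ) ^ j = w ^ m := by
      rw [hw, ← Complex.exp_nat_mul]
      rw [show (m : ℂ) * (Real.pi * j / m * Complex.I) = (j : ℂ) * (Real.pi * Complex.I) by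
        field_simp]
      rw [Complex.exp_nat_mul, Complex.exp_pi_mul_I]
    have hw2 : z ^ j = w * w := by
      rw [hz, hw, ← Complex.exp_nat_mul, ← Complex.exp_add]
      congr 1; ring
    have hcos : ∀ i, w * Complex.cos (Real.pi * j / m - a i) =
        1 / 2 * (z ^ j * Complex.exp (- a i * Complex.I) + Complex.exp (a i * Complex.I)) := by
      intro i
      rw [Complex.cos, hw2, sub_mul, Complex.exp_sub, neg_sub, sub_mul, Complex.exp_sub, ← hw,
        neg_mul, Complex.exp_neg]
      have : w ≠ 0 := Complex.exp_ne_zero _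
      have := Complex.exp_ne_zero (a i * Complex.I)
      field_simp
    have hw' : w ^ m = ∏ _i : Fin m, w := by simp
    rw [hwm, hw', ← Finset.prod_mul_distrib, Finset.prod_congr rfl (fun i _ => hcos i),
      Finset.prod_mul_distrib, Fintype.prod_add, Finset.mul_sum]
    refine Finset.sum_congr rfl fun S _ => ?_
    rw [Finset.prod_mul_distrib, Finset.prod_const, Finset.prod_const, ← pow_mul, mul_comm j]
    simp only [Finset.card_univ, Fintype.card_fin, one_div, inv_pow]
    ring
  have tot : ∑ j ∈ Finset.range m, ((-1 : ℂ) ^ j * ∏ i, Complex.cos (Real.pi * j / m - a i))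
      = m * 2 / 2 ^ m * Complex.cos (∑ i, a i) := by
    rw [Finset.sum_congr rfl (fun j _ => term j), Finset.sum_comm]
    have hne : (∅ : Finset (Fin m)) ≠ Finset.univ := by
      intro h
      have := congrArg Finset.card h
      simp at this; omega
    rw [Finset.sum_eq_add_of_mem (∅ : Finset (Fin m)) Finset.univ (Finset.mem_univ _)
      (Finset.mem_univ _) hne]
    · have hzm : ∀ j, z ^ (m * j) = 1 := fun j => by
        rw [pow_mul, (Complex.isPrimitiveRoot_exp m hm.ne').pow_eq_one, one_pow]
      simp only [Finset.card_empty, zero_mul, pow_zero, Finset.prod_empty, Finset.compl_empty,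
        Finset.card_univ, Fintype.card_fin, hzm, Finset.compl_univ, Finset.sum_const,
        Finset.card_range, nsmul_eq_mul, ← Complex.exp_sum]
      rw [Complex.cos, ← Finset.sum_mul, ← Finset.sum_mul, Finset.sum_neg_distrib]
      ring
    · intro S _ hS
      rw [← Finset.mul_sum, ← Finset.sum_mul, mk_geom m S.card]
      · simp
      · exact Finset.card_pos.2 (Finset.nonempty_iff_ne_empty.2 hS.1)
      · obtain ⟨x, hx⟩ : ∃ x, x ∉ S := by
          by_contra! h
          exact hS.2 (Finset.eq_univ_iff_forall.2 h)
        simpa using Finset.card_lt_univ_of_notMem hx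
  have := congrArg Complex.re tot
  rw [← Complex.ofReal_re (∑ j ∈ Finset.range m, _), ← Complex.ofReal_re (_ * Real.cos _)]
  convert this using 2
  · push_cast; rfl
  · push_cast; rfl

/-- two-angle version -/
lemma mk_cos_two (m i : ℕ) (hm : 0 < m) (hi : i ≤ m) (a b : ℝ) :
    ∑ j ∈ Finset.range m, (-1 : ℝ) ^ j * (Real.cos (Real.pi * j / m - a) ^ (m - i) *
      Real.cos (Real.pi * j / m - b) ^ i) = m * 2 / 2 ^ m * Real.cos ((m - i) * a + i * b) := by
  have h := mk_cos_prod m hm (fun l : Fin m => if (l : ℕ) < i then b else a)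
  have c1 : (Finset.univ.filter (fun l : Fin m => (l : ℕ) < i)).card = i := by
    rw [Fin.card_filter_val_lt]; omega
  have c2 : (Finset.univ.filter (fun l : Fin m => ¬ (l : ℕ) < i)).card = m - i := by
    have := Finset.card_filter_add_card_filter_not (s := (Finset.univ : Finset (Fin m)))
      (fun l : Fin m => (l : ℕ) < i)
    simp only [Finset.card_univ, Fintype.card_fin] at this
    omega
  have e1 : ∑ l : Fin m, (if (l : ℕ) < i then b else a) = (m - i) * a + i * b := by
    rw [Finset.sum_ite, Finset.sum_const, Finset.sum_const, c1, c2, nsmul_eq_mul, nsmul_eq_mul,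
      Nat.cast_sub hi]; ring
  have e2 : ∀ t : ℝ, ∏ l : Fin m, Real.cos (t - if (l : ℕ) < i then b else a) =
      Real.cos (t - a) ^ (m - i) * Real.cos (t - b) ^ i := by
    intro t
    have : ∀ l : Fin m, Real.cos (t - if (l : ℕ) < i then b else a) =
      if (l : ℕ) < i then Real.cos (t - b) else Real.cos (t - a) := fun l => by split_ifs <;> rfl
    rw [Finset.prod_congr rfl (fun l _ => this l), Finset.prod_ite, Finset.prod_const,
      Finset.prod_const, c1, c2, mul_comm]
  rw [e1] at h
  rw [← h]
  exact Finset.sum_congr rfl fun j _ => by rw [e2]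

/-- extraction of a coefficient -/
lemma mk_extract (m k : ℕ) (hm : 0 < m) (hk : k ≤ m) (c : ℕ → ℝ) (G : ℝ → ℝ → ℝ)
    (hG : ∀ s t : ℝ, G s t = ∑ i ∈ Finset.range (m + 1), c i * (s ^ (m - i) * t ^ i)) :
    ∑ l ∈ Finset.range (m + 1), ∑ j ∈ Finset.range m, (-1 : ℝ) ^ j *
      G (Real.cos (Real.pi * j / m - k * (2 * Real.pi * l / (m + 1 : ℕ)) / m))
        (Real.cos (Real.pi * j / m - (k * (2 * Real.pi * l / (m + 1 : ℕ)) / m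
          - 2 * Real.pi * l / (m + 1 : ℕ))))
      = (m + 1) * (m * 2 / 2 ^ m) * c k := by
  have hm' : (m : ℝ) ≠ 0 := by exact_mod_cast hm.ne'
  have h1 : ∀ l : ℕ, ∑ j ∈ Finset.range m, (-1 : ℝ) ^ j *
      G (Real.cos (Real.pi * j / m - k * (2 * Real.pi * l / (m + 1 : ℕ)) / m))
        (Real.cos (Real.pi * j / m - (k * (2 * Real.pi * l / (m + 1 : ℕ)) / m
          - 2 * Real.pi * l / (m + 1 : ℕ)))) =
      ∑ i ∈ Finset.range (m + 1), c i * (m * 2 / 2 ^ m *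
        Real.cos (((k : ℝ) - i) * (2 * Real.pi * l / (m + 1 : ℕ)))) := by
    intro l
    simp only [hG, Finset.mul_sum]
    rw [Finset.sum_comm]
    refine Finset.sum_congr rfl fun i hi => ?_
    have hi' : i ≤ m := by simp at hi; omega
    have := mk_cos_two m i hm hi' (k * (2 * Real.pi * l / (m + 1 : ℕ)) / m)
      (k * (2 * Real.pi * l / (m + 1 : ℕ)) / m - 2 * Real.pi * l / (m + 1 : ℕ))
    rw [show ((m : ℝ) - i) * (k * (2 * Real.pi * l / (m + 1 : ℕ)) / m) +
      i * (k * (2 * Real.pi * l / (m + 1 : ℕ)) / m - 2 * Real.pi * l / (m + 1 : ℕ))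
      = ((k : ℝ) - i) * (2 * Real.pi * l / (m + 1 : ℕ)) by field_simp; ring] at this
    rw [← this, Finset.mul_sum]
    exact Finset.sum_congr rfl fun j _ => by ring
  rw [Finset.sum_congr rfl (fun l _ => h1 l), Finset.sum_comm]
  simp only [← Finset.mul_sum]
  rw [Finset.sum_eq_single_of_mem k (by simp; omega)]
  · simp; ring
  · intro i hi hik
    have hi' : i ≤ m := by simp at hi; omega
    have : ∑ l ∈ Finset.range (m + 1),
        Real.cos (((k : ℝ) - i) * (2 * Real.pi * l / (m + 1 : ℕ))) = 0 := by
      rcases lt_or_gt_of_ne hik with h | h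
      · rw [← mk_cos_sum (m + 1) (k - i) (by omega) (by omega)]
        exact Finset.sum_congr rfl fun l _ => by rw [Nat.cast_sub h.le]
      · rw [← mk_cos_sum (m + 1) (i - k) (by omega) (by omega)]
        refine Finset.sum_congr rfl fun l _ => ?_
        rw [Nat.cast_sub h.le, ← Real.cos_neg]; congr 1; ring
    rw [this]; ring

lemma mk_core_r {E : Type*} [NormedAddCommGroup E] [NormedSpace ℝ E] (m k : ℕ) (hm : 2 ≤ m)
    (hk : k ≤ m) (F : E → ℝ) (s : ℝ) (hs : 0 < s)
    (hCl : ∀ a b : E, ‖a + b‖ ^ m + ‖a - b‖ ^ m ≤ 2 * (‖a‖ ^ s + ‖b‖ ^ s) ^ ((m : ℝ) / s))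
    (M : ℝ) (hM : 0 ≤ M) (hF : ∀ u, |F u| ≤ M * ‖u‖ ^ m) (x y : E) (hx : ‖x‖ ≤ 1) (hy : ‖y‖ ≤ 1)
    (c : ℕ → ℝ)
    (h : ∀ s t : ℝ, F (s • x + t • y) = ∑ i ∈ Finset.range (m + 1), c i * (s ^ (m - i) * t ^ i))
    (r : ℝ) (hr : 0 < r) :
    |c k| * r ^ k ≤ 2 ^ (m - 1) * M * (1 + r ^ s) ^ ((m : ℝ) / s) := by
  have hm0 : 0 < m := by omega
  have E1 := mk_extract m k hm0 hk (fun i => c i * r ^ i) (fun s t => F (s • x + (t * r) • y))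
    (fun s t => by
      rw [h]; exact Finset.sum_congr rfl fun i _ => by rw [mul_pow]; ring)
  have E2 := mk_extract m k hm0 hk (fun i => c i * (-r) ^ i) (fun s t => F (s • x - (t * r) • y))
    (fun s t => by
      rw [sub_eq_add_neg, ← neg_smul, h]
      exact Finset.sum_congr rfl fun i _ => by rw [show -(t * r) = t * (-r) by ring, mul_pow]; ring)
  set K := (1 + r ^ s) ^ ((m : ℝ) / s) with hK
  have bnd : ∀ s' t : ℝ, |s'| ≤ 1 → |t| ≤ 1 →
      |F (s' • x + (t * r) • y)| + |F (s' • x - (t * r) • y)| ≤ 2 * M * K := by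
    intro s' t hs' ht
    have h1 := hCl (s' • x) ((t * r) • y)
    have h2 : ‖s' • x‖ ≤ 1 := by
      rw [norm_smul]; exact mul_le_one₀ hs' (norm_nonneg _) hx
    have h3 : ‖(t * r) • y‖ ≤ r := by
      rw [norm_smul, norm_mul, Real.norm_eq_abs, Real.norm_eq_abs, abs_of_pos hr]
      have : |t| * ‖y‖ ≤ 1 := mul_le_one₀ ht (norm_nonneg _) hy
      nlinarith
    have h4 : (‖s' • x‖ ^ s + ‖(t * r) • y‖ ^ s) ^ ((m : ℝ) / s) ≤ K := by
      refine Real.rpow_le_rpow (by positivity) (add_le_add ?_ ?_) (by positivity)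
      · exact Real.rpow_le_one (norm_nonneg _) h2 hs.le
      · exact Real.rpow_le_rpow (norm_nonneg _) h3 hs.le
    have h5 := hF (s' • x + (t * r) • y)
    have h6 := hF (s' • x - (t * r) • y)
    nlinarith
  have S : |((m : ℝ) + 1) * (m * 2 / 2 ^ m) * (c k * r ^ k)| +
      |((m : ℝ) + 1) * (m * 2 / 2 ^ m) * (c k * (-r) ^ k)| ≤ (m + 1) * (m * (2 * M * K)) := by
    rw [← E1, ← E2]
    refine (add_le_add (Finset.abs_sum_le_sum_abs _ _) (Finset.abs_sum_le_sum_abs _ _)).trans ?_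
    rw [← Finset.sum_add_distrib]
    refine (Finset.sum_le_card_nsmul _ _ (m * (2 * M * K)) fun l _ => ?_).trans
      (le_of_eq (by simp))
    refine (add_le_add (Finset.abs_sum_le_sum_abs _ _) (Finset.abs_sum_le_sum_abs _ _)).trans ?_
    rw [← Finset.sum_add_distrib]
    refine (Finset.sum_le_card_nsmul _ _ (2 * M * K) fun j _ => ?_).trans
      (le_of_eq (by simp))
    simp only [abs_mul, abs_pow, abs_neg, abs_one, one_pow, one_mul]
    exact bnd _ _ (Real.abs_cos_le_one _) (Real.abs_cos_le_one _)
  have hmr : (0 : ℝ) < m := by exact_mod_cast hm0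
  simp only [abs_mul, abs_pow, abs_neg, abs_of_pos hr] at S
  rw [abs_of_pos (by positivity : (0 : ℝ) < m + 1),
    abs_of_pos (by positivity : (0 : ℝ) < m * 2 / 2 ^ m)] at S
  have e : (2 : ℝ) ^ m = 2 ^ (m - 1) * 2 := by rw [← pow_succ]; congr 1; omega
  rw [e] at S
  have h2 : (0 : ℝ) < 2 ^ (m - 1) := by positivity
  have S' : ((m + 1) * m * 2 / 2 ^ (m - 1)) * (|c k| * r ^ k) ≤
      ((m + 1) * m * 2 / 2 ^ (m - 1)) * (2 ^ (m - 1) * M * K) := by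
    calc _ = _ := ?_
      _ ≤ _ := S
      _ = _ := ?_
    · field_simp; ring
    · field_simp
  exact le_of_mul_le_mul_left S' (by positivity)

lemma mk_core {E : Type*} [NormedAddCommGroup E] [NormedSpace ℝ E] (m k : ℕ) (hm : 2 ≤ m)
    (hk : k ≤ m) (F : E → ℝ) (s : ℝ) (hs : 0 < s)
    (hCl : ∀ a b : E, ‖a + b‖ ^ m + ‖a - b‖ ^ m ≤ 2 * (‖a‖ ^ s + ‖b‖ ^ s) ^ ((m : ℝ) / s))
    (M : ℝ) (hM : 0 ≤ M) (hF : ∀ u, |F u| ≤ M * ‖u‖ ^ m) (x y : E) (hx : ‖x‖ ≤ 1) (hy : ‖y‖ ≤ 1)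
    (c : ℕ → ℝ)
    (h : ∀ s t : ℝ, F (s • x + t • y) = ∑ i ∈ Finset.range (m + 1), c i * (s ^ (m - i) * t ^ i)) :
    |(k.factorial : ℝ) * c k| ≤ 2 ^ (m - 1) * markovC k m s * M := by
  have hm0 : 0 < m := by omega
  have hmr : (0 : ℝ) < m := by exact_mod_cast hm0
  rw [abs_mul, Nat.abs_cast]
  have one : (1 : ℝ) ≤ 2 ^ (m - 1) := one_le_pow₀ (by norm_num)
  have hfk : (0 : ℝ) < k.factorial := by exact_mod_cast k.factorial_pos
  have hF1 : ∀ u, ‖u‖ ≤ 1 → |F u| ≤ M := fun u hu =>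
    (hF u).trans (mul_le_of_le_one_right hM (pow_le_one₀ (norm_nonneg _) hu))
  have triv : |c k| ≤ M → markovC k m s = k.factorial →
      (k.factorial : ℝ) * |c k| ≤ 2 ^ (m - 1) * markovC k m s * M := by
    intro h1 h2
    rw [h2]
    have : (k.factorial : ℝ) * |c k| ≤ k.factorial * M := by gcongr
    have h3 : 0 ≤ (k.factorial : ℝ) * M := by positivity
    nlinarith
  rcases Nat.eq_zero_or_pos k with rfl | hk0
  · apply triv
    · have h1 := h 1 0
      rw [Finset.sum_eq_single_of_mem 0 (by simp)] at h1
      · simp at h1; rw [← h1]; exact hF1 x hx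
      · intro i _ hi; simp [hi]
    · unfold markovC
      have := (Real.rpow_pos_of_pos hmr (m / s)).ne'
      simp [this]
  rcases hk.eq_or_lt with rfl | hlt
  · apply triv
    · have h1 := h 0 1
      rw [Finset.sum_eq_single_of_mem k (by simp)] at h1
      · simp at h1; rw [← h1]; exact hF1 y hy
      · intro i hi hik
        have : k - i ≠ 0 := by simp at hi; omega
        simp [this]
    · unfold markovC
      have := (Real.rpow_pos_of_pos hmr (k / s)).ne'
      simp [this]
  have hkr : (0 : ℝ) < k := by exact_mod_cast hk0
  have hmk : (0 : ℝ) < m - k := by rw [sub_pos]; exact_mod_cast hlt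
  set r : ℝ := ((k : ℝ) / (m - k)) ^ (1 / s) with hrdef
  have hq : 0 < (k : ℝ) / (m - k) := by positivity
  have hr : 0 < r := Real.rpow_pos_of_pos hq _
  have main := mk_core_r m k hm hk F s hs hCl M hM hF x y hx hy c h r hr
  have hrs : r ^ s = k / (m - k) := by
    rw [hrdef, ← Real.rpow_mul hq.le, one_div_mul_cancel hs.ne', Real.rpow_one]
  have hrk : r ^ k = (k : ℝ) ^ ((k : ℝ) / s) / (m - k : ℝ) ^ ((k : ℝ) / s) := by
    rw [hrdef, ← Real.rpow_natCast, ← Real.rpow_mul hq.le, Real.div_rpow hkr.le hmk.le]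
    congr 2 <;> ring
  have e1 : (1 : ℝ) + k / (m - k) = m / (m - k) := by field_simp; ring
  rw [hrs, e1, Real.div_rpow hmr.le hmk.le, hrk] at main
  have e2 : (m - k : ℝ) ^ ((m : ℝ) / s) =
      (m - k : ℝ) ^ (((m : ℝ) - k) / s) * (m - k : ℝ) ^ ((k : ℝ) / s) := by
    rw [← Real.rpow_add hmk]; congr 1; ring
  rw [e2] at main
  have p1 := Real.rpow_pos_of_pos hkr ((k : ℝ) / s)
  have p2 := Real.rpow_pos_of_pos hmk ((k : ℝ) / s)
  have p3 := Real.rpow_pos_of_pos hmk (((m : ℝ) - k) / s)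
  unfold markovC
  generalize (k : ℝ) ^ ((k : ℝ) / s) = X at *
  generalize (m - k : ℝ) ^ ((k : ℝ) / s) = Y at *
  generalize (m - k : ℝ) ^ (((m : ℝ) - k) / s) = Z at *
  generalize (m : ℝ) ^ ((m : ℝ) / s) = W at *
  have hb : |c k| ≤ 2 ^ (m - 1) * M * (W / (Z * Y)) / (X / Y) := by
    rw [le_div_iff₀ (by positivity)]; exact main
  calc (k.factorial : ℝ) * |c k| ≤ k.factorial * (2 ^ (m - 1) * M * (W / (Z * Y)) / (X / Y)) := by
        gcongr
    _ = _ := by field_simp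

lemma mk_final {α : Type*} [MeasurableSpace α] (μ : Measure α)
    (m k : ℕ) (hm : 2 ≤ m) (hk : k ≤ m) (p : ℝ≥0∞) [Fact (1 ≤ p)]
    (F : Lp ℝ p μ → ℝ)
    (hF : ∃ L : ContinuousMultilinearMap ℝ (fun _ : Fin m => Lp ℝ p μ) ℝ,
      (∀ (σ : Equiv.Perm (Fin m)) (v : Fin m → Lp ℝ p μ), L (v ∘ σ) = L v) ∧
      ∀ u, F u = L (fun _ => u)) (s : ℝ) (hs : 0 < s)
    (hCl : ∀ a b : Lp ℝ p μ, ‖a + b‖ ^ m + ‖a - b‖ ^ m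
      ≤ 2 * (‖a‖ ^ s + ‖b‖ ^ s) ^ ((m : ℝ) / s)) (x : Lp ℝ p μ) (hx : ‖x‖ ≤ 1) :
    sSup ((fun y => ‖iteratedFDeriv ℝ k F x (fun _ => y)‖) '' closedBall (0 : Lp ℝ p μ) 1)
          ≤ (2 : ℝ) ^ (m - 1) * markovC k m s
              * sSup ((fun y => ‖F y‖) '' closedBall (0 : Lp ℝ p μ) 1) := by
  obtain ⟨L, -, hL⟩ := hF
  have hFL : F = fun u => L (fun _ => u) := funext hL
  have hcd : ContDiff ℝ ⊤ F := by
    rw [hFL]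
    exact L.contDiff.comp (contDiff_pi.2 fun _ => contDiff_id)
  set M := sSup ((fun y => ‖F y‖) '' closedBall (0 : Lp ℝ p μ) 1) with hMdef
  have hbdd : BddAbove ((fun y => ‖F y‖) '' closedBall (0 : Lp ℝ p μ) 1) := by
    refine ⟨‖L‖, ?_⟩
    rintro _ ⟨y, hy, rfl⟩
    rw [mem_closedBall_zero_iff] at hy
    simp only [hL]
    refine (L.le_opNorm _).trans (mul_le_of_le_one_right (norm_nonneg _) ?_)
    exact Finset.prod_le_one (fun _ _ => norm_nonneg _) (fun _ _ => hy)
  have hMle : ∀ y, ‖y‖ ≤ 1 → |F y| ≤ M := fun y hy =>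
    le_csSup hbdd ⟨y, mem_closedBall_zero_iff.2 hy, rfl⟩
  have hM : 0 ≤ M := (abs_nonneg _).trans (hMle 0 (by simp))
  have hhom : ∀ (t : ℝ) u, F (t • u) = t ^ m * F u := fun t u => by
    rw [hL, hL]
    have := L.toMultilinearMap.map_smul_univ (fun _ => t) (fun _ => u)
    simpa using this
  have hFM : ∀ u, |F u| ≤ M * ‖u‖ ^ m := by
    intro u
    by_cases hu : u = 0
    · subst hu
      have := hhom 0 0
      rw [zero_smul, zero_pow (by omega), zero_mul] at this
      rw [this]; simp; positivity
    · have hn : 0 < ‖u‖ := norm_pos_iff.2 hu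
      have h1 := hMle (‖u‖⁻¹ • u) (by rw [norm_smul, norm_inv, norm_norm, inv_mul_cancel₀ hn.ne'])
      rw [hhom, abs_mul, abs_of_pos (by positivity), inv_pow, inv_mul_le_iff₀ (by positivity)] at h1
      linarith
  refine csSup_le ⟨_, 0, by simp, rfl⟩ ?_
  rintro _ ⟨y, hy, rfl⟩
  rw [mem_closedBall_zero_iff] at hy
  obtain ⟨c, hc⟩ := mk_expand m L x y
  have hc' : ∀ s t : ℝ, F (s • x + t • y) =
      ∑ i ∈ Finset.range (m + 1), c i * (s ^ (m - i) * t ^ i) := fun s t => by rw [hL, hc]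
  have := mk_core m k hm hk F s hs hCl M hM hFM x y hx hy c hc'
  simp only [mk_deriv m k hk F hcd x y c hc', Real.norm_eq_abs]
  exact this

/-- Markov-type inequality for an `m`-homogeneous polynomial on a real `L_p(μ)` space:
`sup_{‖x‖_p ≤ 1} ‖D̂^k L̂(x)‖ ≤ 2^{m-1} C_{k,m} ‖L̂‖`, where the constant `C_{k,m}` uses the
regime exponent `p` for `1 ≤ p ≤ m'`, `m' = m/(m-1)` for `m' ≤ p ≤ m`, and
`p' = p/(p-1)` for `m ≤ p ≤ ∞`. -/
theorem markov_homogeneous_Lp_real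
    {α : Type*} [MeasurableSpace α] (μ : Measure α)
    (m k : ℕ) (hm : 2 ≤ m) (hk : k ≤ m) (p : ℝ≥0∞) [Fact (1 ≤ p)]
    (F : Lp ℝ p μ → ℝ)
    (hF : ∃ L : ContinuousMultilinearMap ℝ (fun _ : Fin m => Lp ℝ p μ) ℝ,
      (∀ (σ : Equiv.Perm (Fin m)) (v : Fin m → Lp ℝ p μ), L (v ∘ σ) = L v) ∧
      ∀ u, F u = L (fun _ => u)) :
    (p ≤ ENNReal.ofReal ((m : ℝ) / ((m : ℝ) - 1)) →
      ∀ x : Lp ℝ p μ, ‖x‖ ≤ 1 →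
        sSup ((fun y => ‖iteratedFDeriv ℝ k F x (fun _ => y)‖) '' closedBall (0 : Lp ℝ p μ) 1)
          ≤ (2 : ℝ) ^ (m - 1) * markovC k m p.toReal
              * sSup ((fun y => ‖F y‖) '' closedBall (0 : Lp ℝ p μ) 1)) ∧
    (ENNReal.ofReal ((m : ℝ) / ((m : ℝ) - 1)) ≤ p → p ≤ (m : ℝ≥0∞) →
      ∀ x : Lp ℝ p μ, ‖x‖ ≤ 1 →
        sSup ((fun y => ‖iteratedFDeriv ℝ k F x (fun _ => y)‖) '' closedBall (0 : Lp ℝ p μ) 1)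
          ≤ (2 : ℝ) ^ (m - 1) * markovC k m ((m : ℝ) / ((m : ℝ) - 1))
              * sSup ((fun y => ‖F y‖) '' closedBall (0 : Lp ℝ p μ) 1)) ∧
    ((m : ℝ≥0∞) ≤ p →
      ∀ x : Lp ℝ p μ, ‖x‖ ≤ 1 →
        sSup ((fun y => ‖iteratedFDeriv ℝ k F x (fun _ => y)‖) '' closedBall (0 : Lp ℝ p μ) 1)
          ≤ (2 : ℝ) ^ (m - 1) * markovC k m (conjExp p)
              * sSup ((fun y => ‖F y‖) '' closedBall (0 : Lp ℝ p μ) 1)) := by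
  have hp : 1 ≤ p := Fact.out
  have hp0 : p ≠ 0 := (zero_lt_one.trans_le hp).ne'
  have hmr : (2 : ℝ) ≤ m := by exact_mod_cast hm
  have hm1 : (0 : ℝ) < m - 1 := by linarith
  have hm'0 : (0 : ℝ) < m / (m - 1) := by positivity
  have hm'm : (m : ℝ) / (m - 1) ≤ m := by
    rw [div_le_iff₀ hm1]; nlinarith
  refine ⟨fun h x hx => ?_, fun h1 h2 x hx => ?_, fun h x hx => ?_⟩
  · have htop : p ≠ ∞ := ne_top_of_le_ne_top ENNReal.ofReal_ne_top h
    have hP : 0 < p.toReal := ENNReal.toReal_pos hp0 htop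
    have hle : p.toReal ≤ (m : ℝ) / (m - 1) := ENNReal.toReal_le_of_le_ofReal hm'0.le h
    refine mk_final μ m k hm hk p F hF _ hP (fun a b => ?_) x hx
    have := mk_norm μ p htop a b m p.toReal hmr (hle.trans hm'm) (Or.inl ⟨rfl, hle⟩)
    simpa only [Real.rpow_natCast] using this
  · have htop : p ≠ ∞ := ne_top_of_le_ne_top (ENNReal.natCast_ne_top m) h2
    have hle : (m : ℝ) / (m - 1) ≤ p.toReal := (ENNReal.ofReal_le_iff_le_toReal htop).1 h1
    have hle2 : p.toReal ≤ m := by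
      have := ENNReal.toReal_mono (ENNReal.natCast_ne_top m) h2
      simpa using this
    refine mk_final μ m k hm hk p F hF _ hm'0 (fun a b => ?_) x hx
    have := mk_norm μ p htop a b m _ hmr hle2 (Or.inr ⟨rfl, hle⟩)
    simpa only [Real.rpow_natCast] using this
  · by_cases htop : p = ∞
    · have e : conjExp p = 1 := by simp [conjExp, htop]
      rw [e]
      refine mk_final μ m k hm hk p F hF _ one_pos (fun a b => ?_) x hx
      simp only [Real.rpow_one, div_one, Real.rpow_natCast]
      have h1 := pow_le_pow_left₀ (norm_nonneg _) (norm_add_le a b) m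
      have h2 := pow_le_pow_left₀ (norm_nonneg _) (norm_sub_le a b) m
      linarith
    · have e : conjExp p = p.toReal / (p.toReal - 1) := by simp [conjExp, htop]
      have hmp : (m : ℝ) ≤ p.toReal := by
        have := ENNReal.toReal_mono htop h
        simpa using this
      have hq : 2 ≤ p.toReal := hmr.trans hmp
      have hq1 : 0 < p.toReal - 1 := by linarith
      have hs : 0 < p.toReal / (p.toReal - 1) := by positivity
      rw [e]
      refine mk_final μ m k hm hk p F hF _ hs (fun a b => ?_) x hx
      have hqq : p.toReal / (p.toReal - 1) ≤ p.toReal := by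
        rw [div_le_iff₀ hq1]; nlinarith
      have h1 := mk_norm μ p htop a b p.toReal _ hq le_rfl (Or.inr ⟨rfl, hqq⟩)
      set q := p.toReal
      set s := q / (q - 1)
      have hm0 : (0 : ℝ) < m := by linarith
      have hcv := (convexOn_rpow (p := q / m) (by rwa [one_le_div hm0])).2
        (show ‖a + b‖ ^ m ∈ Set.Ici (0:ℝ) from by simp only [Set.mem_Ici]; positivity)
        (show ‖a - b‖ ^ m ∈ Set.Ici (0:ℝ) from by simp only [Set.mem_Ici]; positivity)
        (show (0 : ℝ) ≤ 1 / 2 by norm_num) (show (0 : ℝ) ≤ 1 / 2 by norm_num) (by norm_num)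
      simp only [smul_eq_mul] at hcv
      have ee : ∀ t : ℝ, 0 ≤ t → (t ^ m) ^ (q / m) = t ^ q := fun t ht => by
        rw [← Real.rpow_natCast, ← Real.rpow_mul ht]; congr 1; field_simp
      rw [ee _ (norm_nonneg _), ee _ (norm_nonneg _)] at hcv
      have h3 : (1 / 2 * ‖a + b‖ ^ m + 1 / 2 * ‖a - b‖ ^ m) ^ (q / m)
          ≤ (‖a‖ ^ s + ‖b‖ ^ s) ^ (q / s) := by linarith
      have h4 := Real.rpow_le_rpow (by positivity) h3 (z := m / q) (by positivity)
      rw [← Real.rpow_mul (by positivity), ← Real.rpow_mul (by positivity),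
        show q / m * (m / q) = 1 by field_simp, show q / s * (m / q) = m / s by field_simp,
        Real.rpow_one] at h4
      linarith
end
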